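/- Let F ⊂ ℝ² be any non-empty set. Then the set {π ∈ G(2,1) : dim_A πF < min(1, dim_A F)} is at most countable. -/

import Mathlib

/-!
Away from the vertical direction a projection is, up to a factor, the map `xi θ p = p.1 + θ * p.2`.
The exceptional directions form a countable union, over rational exponents `s < min 1 (dim_A F)`,
integer constants `C` and bounds `Θ`, of sets `E` of slopes `|θ| ≤ Θ` for which all the projections
`xi θ (F)` satisfy the same dimension bound `Hom C s θ` (`exists_Hom`). If such an `E` were
uncountable, it would contain a non-empty set of slopes without isolated points
(`exists_dense_in_itself`), and this is shown to be impossible (`not_good`).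

All estimates concern finite subsets `A` of homothetic copies of `F`, with the uniform measure, and
the Shannon entropy of two families of partitions: dyadic squares `D n` and strips `P θ u n`. As
`s < t < dim_A F`, some such sets `A` have fibres of entropy at least about `(t - s) * log 2` per
scale for every slope in `E` (`good_of_dim`). Among all rates `v` of fibre entropy that can be
attained over arbitrarily long ranges of scales (`Good`), a nearly maximal one is chosen. Since a
slightly larger rate is not attained over windows of length `l`, not even inside a square, the strips
of a set with rate `v` share little mutual information with the squares that are `l` levels coarser
(`block_bound`, `psi_total`).

Each slope `θ` is now paired with a slope `θ'` of `E` at distance about `2 ^ (-m)`. Suppose that in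
one square the distributions of `xi θ` and `xi θ'` hardly change when conditioned on much smaller
squares. If a strip contains two points with different second coordinates `y₁`, `y₂`, then the
distribution of `xi θ` is nearly invariant under translation by `(θ' - θ) * (y₁ - y₂)`
(`frac_step`), so the projection contains a long approximate arithmetic progression, against
`s < 1` (`no_two_good`). Hence most points of a strip inside the square have almost the same second
coordinate, and the fibre has bounded entropy over windows of arbitrary length `a` (`local_main`,
`pair_step`). Summing over scales and slopes contradicts the positive rate `v` (`pair_sum`,
`not_good`).

Strips of different slopes only match up to their endpoints; the offsets `u` of the strips are chosen
so that few points lie `near` an endpoint (`exists_offset`).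
-/

open Set
open scoped ENNReal

noncomputable section

/-- The smallest number of sets of diameter at most `r` needed to cover `A`
(`⊤` if no finite cover exists). -/
def coverNumber {X : Type*} [PseudoMetricSpace X] (A : Set X) (r : ℝ) : ℝ≥0∞ :=
  ⨅ (S : Finset (Set X)) (_ : A ⊆ ⋃ s ∈ S, s)
    (_ : ∀ s ∈ S, EMetric.diam s ≤ ENNReal.ofReal r), (S.card : ℝ≥0∞)

/-- The Assouad dimension of a subset of a metric space. -/
def assouadDim {X : Type*} [PseudoMetricSpace X] (F : Set X) : ℝ :=
  sInf {s : ℝ | 0 ≤ s ∧ ∃ C : ℝ, 0 < C ∧ ∀ x ∈ F, ∀ r R : ℝ, 0 < r → r < R →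
    coverNumber (F ∩ Metric.ball x R) r ≤ ENNReal.ofReal (C * (R / r) ^ s)}

/-- The orthogonal projection onto the line of angle `θ`, identified with `ℝ`. -/
def projDir (θ : ℝ) (p : ℝ × ℝ) : ℝ := p.1 * Real.cos θ + p.2 * Real.sin θ

/-! ### Entropy of partitions of a finite set -/

namespace AssouadProj

section Entropy

open scoped Classical

variable {α : Type*}

/-- The class of `a` in the finite set `A` under the equivalence relation `r`. -/
def cls (A : Finset α) (r : Setoid α) (a : α) : Finset α := A.filter fun b => r b a

/-- The sum over `A` of the logarithm of the size of the `r`-class. If `H` denotes the Shannon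
entropy of the partition of `A` into `r`-classes, for the uniform measure on `A`, then
`H = log |A| - G A r / |A|`. Joint partitions are infima of setoids. -/
def G (A : Finset α) (r : Setoid α) : ℝ := ∑ a ∈ A, Real.log ((cls A r a).card : ℝ)

/-- `|A|` times the conditional entropy `H(f | g)`. -/
def cH (A : Finset α) (f g : Setoid α) : ℝ := G A g - G A (f ⊓ g)

/-- `|A|` times the conditional mutual information `I(f ; g | h)`. -/
def mI (A : Finset α) (f g h : Setoid α) : ℝ :=
  G A h + G A (f ⊓ g ⊓ h) - G A (f ⊓ h) - G A (g ⊓ h)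

lemma mem_cls {A : Finset α} {r : Setoid α} {a b : α} : b ∈ cls A r a ↔ b ∈ A ∧ r b a := by
  simp [cls]

lemma self_mem_cls {A : Finset α} {r : Setoid α} {a : α} (ha : a ∈ A) : a ∈ cls A r a :=
  mem_cls.2 ⟨ha, r.refl a⟩

lemma cls_subset (A : Finset α) (r : Setoid α) (a : α) : cls A r a ⊆ A := Finset.filter_subset _ _

lemma cls_eq {A : Finset α} {r : Setoid α} {a b : α} (h : r a b) : cls A r a = cls A r b := by
  ext c
  simp only [mem_cls]
  exact and_congr_right fun _ => ⟨fun hc => r.trans hc h, fun hc => r.trans hc (r.symm h)⟩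

lemma cls_pos {A : Finset α} {r : Setoid α} {a : α} (ha : a ∈ A) :
    (0 : ℝ) < ((cls A r a).card : ℝ) := by
  exact_mod_cast Finset.card_pos.2 ⟨a, self_mem_cls ha⟩

lemma cls_mono {A : Finset α} {r s : Setoid α} (h : r ≤ s) (a : α) : cls A r a ⊆ cls A s a := by
  intro b hb
  rw [mem_cls] at hb ⊢
  exact ⟨hb.1, h hb.2⟩

lemma cls_inf (A : Finset α) (r s : Setoid α) (a : α) :
    cls A (r ⊓ s) a = cls (cls A r a) s a := by
  ext b
  simp only [mem_cls]
  change b ∈ A ∧ (r b a ∧ s b a) ↔ _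
  tauto

lemma G_mono (A : Finset α) {r s : Setoid α} (h : r ≤ s) : G A r ≤ G A s := by
  refine Finset.sum_le_sum fun a ha => Real.log_le_log (cls_pos ha) ?_
  exact_mod_cast Finset.card_le_card (cls_mono h a)

lemma G_le_top (A : Finset α) (r : Setoid α) : G A r ≤ G A ⊤ := G_mono A le_top

lemma G_inf_of_const {A : Finset α} {r s : Setoid α} (h : ∀ a ∈ A, ∀ b ∈ A, r a b) :
    G A (r ⊓ s) = G A s := by
  refine Finset.sum_congr rfl fun a ha => ?_
  have : cls A (r ⊓ s) a = cls A s a := by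
    ext b
    simp only [mem_cls]
    exact ⟨fun h' => ⟨h'.1, h'.2.2⟩, fun h' => ⟨h'.1, h b h'.1 a ha, h'.2⟩⟩
  rw [this]

/-- Double counting over the pairs of points lying in a common class. -/
lemma sum_cls_swap (A : Finset α) (r : Setoid α) (F : α → α → ℝ) :
    ∑ a ∈ A, ∑ b ∈ cls A r a, F a b = ∑ b ∈ A, ∑ a ∈ cls A r b, F a b := by
  refine Finset.sum_comm' fun a b => ?_
  simp only [mem_cls]
  constructor
  · rintro ⟨h1, h2, h3⟩; exact ⟨⟨h1, r.symm h3⟩, h2⟩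
  · rintro ⟨⟨h1, h3⟩, h2⟩; exact ⟨h1, h2, r.symm h3⟩

/-- Averaging over the classes of `r` does not change a sum over `A`. -/
lemma sum_avg (A : Finset α) (r : Setoid α) (t : α → ℝ) :
    ∑ a ∈ A, ((cls A r a).card : ℝ)⁻¹ * ∑ b ∈ cls A r a, t b = ∑ a ∈ A, t a := by
  have : ∀ a ∈ A, ((cls A r a).card : ℝ)⁻¹ * ∑ b ∈ cls A r a, t b =
      ∑ b ∈ cls A r a, ((cls A r b).card : ℝ)⁻¹ * t b := by
    intro a _
    rw [Finset.mul_sum]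
    refine Finset.sum_congr rfl fun b hb => ?_
    rw [cls_eq (mem_cls.1 hb).2]
  rw [Finset.sum_congr rfl this, sum_cls_swap]
  refine Finset.sum_congr rfl fun b hb => ?_
  rw [Finset.sum_const, nsmul_eq_mul, ← mul_assoc, mul_inv_cancel₀ (cls_pos hb).ne', one_mul]

lemma G_inf_eq (A : Finset α) (r s : Setoid α) :
    G A (r ⊓ s) = ∑ a ∈ A, ((cls A r a).card : ℝ)⁻¹ * G (cls A r a) s := by
  rw [G, ← sum_avg A r]
  refine Finset.sum_congr rfl fun a _ => ?_
  congr 1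
  refine Finset.sum_congr rfl fun b hb => ?_
  rw [cls_inf, cls_eq (mem_cls.1 hb).2]

/-- The number of classes, as a sum of reciprocals of class sizes. -/
lemma sum_inv_card {β : Type*} [DecidableEq β] (U : Finset α) (φ : α → β) :
    ∑ a ∈ U, ((U.filter fun c => φ c = φ a).card : ℝ)⁻¹ = ((U.image φ).card : ℝ) := by
  have := Finset.sum_comp (s := U) (fun b => ((U.filter fun c => φ c = b).card : ℝ)⁻¹) φ
  rw [this, Finset.card_eq_sum_ones, Nat.cast_sum]
  refine Finset.sum_congr rfl fun b hb => ?_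
  obtain ⟨a, ha, rfl⟩ := Finset.mem_image.1 hb
  have h : ((U.filter fun c => φ c = φ a).card : ℝ) ≠ 0 := by
    have : 0 < (U.filter fun c => φ c = φ a).card :=
      Finset.card_pos.2 ⟨a, by simp [ha]⟩
    exact_mod_cast this.ne'
  rw [nsmul_eq_mul, mul_inv_cancel₀ h, Nat.cast_one]

/-- A conditional entropy is at most the mean logarithm of the number `K` of values of `φ`
inside a class of `g`. -/
lemma cH_le {β : Type*} [DecidableEq β] (A : Finset α) (φ : α → β) (g : Setoid α) (K : α → ℝ)
    (hK : ∀ a ∈ A, 0 < K a) (hinv : ∀ a ∈ A, ∀ b ∈ A, g a b → K a = K b)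
    (hcard : ∀ a ∈ A, (((cls A g a).image φ).card : ℝ) ≤ K a) :
    cH A (Setoid.ker φ) g ≤ ∑ a ∈ A, Real.log (K a) := by
  have key : ∑ a ∈ A, ((cls A g a).card : ℝ) / (K a * (cls A (Setoid.ker φ ⊓ g) a).card)
      ≤ A.card := by
    have h1 : ∀ a ∈ A, ((cls A g a).card : ℝ) / (K a * (cls A (Setoid.ker φ ⊓ g) a).card) =
        ∑ b ∈ cls A g a, (K a * (cls A (Setoid.ker φ ⊓ g) a).card : ℝ)⁻¹ := by
      intro a _
      rw [Finset.sum_const, nsmul_eq_mul, div_eq_mul_inv]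
    rw [Finset.sum_congr rfl h1, sum_cls_swap, Finset.card_eq_sum_ones, Nat.cast_sum]
    refine Finset.sum_le_sum fun b hb => ?_
    have h2 : ∀ a ∈ cls A g b, (K a * (cls A (Setoid.ker φ ⊓ g) a).card : ℝ)⁻¹ =
        (K b)⁻¹ * (((cls A g b).filter fun c => φ c = φ a).card : ℝ)⁻¹ := by
      intro a ha
      rw [mul_inv, hinv a (mem_cls.1 ha).1 b hb (mem_cls.1 ha).2, inf_comm, cls_inf,
        cls_eq (mem_cls.1 ha).2]
      congr 4
      ext c
      rw [mem_cls, Finset.mem_filter, Setoid.ker_def]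
    rw [Finset.sum_congr rfl h2, ← Finset.mul_sum, sum_inv_card, Nat.cast_one,
      inv_mul_le_iff₀ (hK b hb), mul_one]
    exact hcard b hb
  have hlog : ∀ a ∈ A, Real.log ((cls A g a).card : ℝ)
      - Real.log ((cls A (Setoid.ker φ ⊓ g) a).card : ℝ) ≤ Real.log (K a) +
        (((cls A g a).card : ℝ) / (K a * (cls A (Setoid.ker φ ⊓ g) a).card) - 1) := by
    intro a ha
    have p1 := cls_pos (r := g) ha
    have p2 := cls_pos (r := Setoid.ker φ ⊓ g) ha
    have p3 := hK a ha
    have := Real.log_le_sub_one_of_pos (div_pos p1 (mul_pos p3 p2))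
    rw [Real.log_div p1.ne' (mul_pos p3 p2).ne', Real.log_mul p3.ne' p2.ne'] at this
    linarith
  have := Finset.sum_le_sum hlog
  rw [Finset.sum_sub_distrib, Finset.sum_add_distrib, Finset.sum_sub_distrib] at this
  simp only [Finset.sum_const, nsmul_eq_mul, mul_one] at this
  unfold cH G
  linarith

/-- The relative entropy of `f` on the class `[a]` of `h ⊓ g` with respect to the class of `h`. -/
def dKL (A : Finset α) (f g h : Setoid α) (a : α) : ℝ :=
  ((cls A (g ⊓ h) a).card : ℝ)⁻¹ * ∑ b ∈ cls A (g ⊓ h) a,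
    (Real.log (cls A h b).card + Real.log (cls A (f ⊓ g ⊓ h) b).card
      - Real.log (cls A (f ⊓ h) b).card - Real.log (cls A (g ⊓ h) b).card)

lemma mI_eq_sum_dKL (A : Finset α) (f g h : Setoid α) :
    mI A f g h = ∑ a ∈ A, dKL A f g h a := by
  unfold dKL
  rw [sum_avg]
  simp only [Finset.sum_sub_distrib, Finset.sum_add_distrib]
  rfl

/-- The Hellinger lower bound for relative entropy, after merging all classes of `f` into the
two sets `S` and its complement. -/
lemma hellinger_le_dKL (A : Finset α) (f g h : Setoid α) {a : α} (ha : a ∈ A) (S : α → Prop)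
    (hS : ∀ b c, f b c → S b → S c) :
    2 - 2 * (√((((cls A (g ⊓ h) a).filter S).card / (cls A (g ⊓ h) a).card : ℝ) *
        (((cls A h a).filter S).card / (cls A h a).card)) +
      √((((cls A (g ⊓ h) a).filter fun b => ¬ S b).card / (cls A (g ⊓ h) a).card : ℝ) *
        (((cls A h a).filter fun b => ¬ S b).card / (cls A h a).card))) ≤ dKL A f g h a := by
  set U := cls A h a with hU
  set U₁ := cls A (g ⊓ h) a with hU₁
  have hUpos : (0 : ℝ) < U.card := cls_pos ha
  have hU₁pos : (0 : ℝ) < U₁.card := cls_pos ha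
  have hsub : U₁ ⊆ U := cls_mono inf_le_right a
  have hrel : ∀ b ∈ U₁, (g ⊓ h) b a := fun b hb => (mem_cls.1 hb).2
  -- one term of the relative entropy, bounded below by `log t ≥ 2 (1 - 1 / √t)`
  have hterm : ∀ b ∈ U₁, 2 - 2 * (√((cls U f b).card : ℝ) * √(((cls U₁ f b).card : ℝ)⁻¹)
      * √(U₁.card / U.card : ℝ)) ≤
      Real.log (cls A h b).card + Real.log (cls A (f ⊓ g ⊓ h) b).card
      - Real.log (cls A (f ⊓ h) b).card - Real.log (cls A (g ⊓ h) b).card := by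
    intro b hb
    have hbA : b ∈ A := (mem_cls.1 hb).1
    have e1 : cls A h b = U := cls_eq (hrel b hb).2
    have e2 : cls A (g ⊓ h) b = U₁ := cls_eq (hrel b hb)
    have e3 : cls A (f ⊓ h) b = cls U f b := by rw [inf_comm, cls_inf, e1]
    have e4 : cls A (f ⊓ g ⊓ h) b = cls U₁ f b := by
      rw [inf_assoc, inf_comm, cls_inf, e2]
    rw [e1, e2, e3, e4]
    have p1 : (0 : ℝ) < (cls U f b).card := cls_pos (hsub hb)
    have p2 : (0 : ℝ) < (cls U₁ f b).card := cls_pos hb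
    rw [← Real.sqrt_mul p1.le, ← Real.sqrt_mul (by positivity)]
    set x : ℝ := (cls U f b).card * ((cls U₁ f b).card : ℝ)⁻¹ * (U₁.card / U.card) with hx
    have hxpos : 0 < x := by positivity
    have hl := Real.log_le_sub_one_of_pos (Real.sqrt_pos.2 hxpos)
    rw [Real.log_sqrt hxpos.le, hx, Real.log_mul (by positivity) (by positivity),
      Real.log_mul (by positivity) (by positivity), Real.log_inv,
      Real.log_div (by positivity) (by positivity), ← hx] at hl
    linarith
  -- Cauchy-Schwarz on one side of the splitting
  have hcs : ∀ (Q : α → Prop) [DecidablePred Q], (∀ b c, f b c → Q b → Q c) →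
      ∑ b ∈ U₁.filter Q, √((cls U f b).card : ℝ) * √(((cls U₁ f b).card : ℝ)⁻¹) ≤
        √((U₁.filter Q).card : ℝ) * √((U.filter Q).card : ℝ) := by
    intro Q _ hQ
    have h1 : ∀ b ∈ U₁.filter Q, √((cls U f b).card : ℝ) * √(((cls U₁ f b).card : ℝ)⁻¹) =
        √(1 : ℝ) * √(((cls U f b).card : ℝ) * ((cls U₁ f b).card : ℝ)⁻¹) := by
      intro b _
      rw [Real.sqrt_one, one_mul, Real.sqrt_mul (by positivity)]
    rw [Finset.sum_congr rfl h1]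
    refine (Real.sum_sqrt_mul_sqrt_le _ (fun _ => zero_le_one)
      (fun b => by positivity)).trans ?_
    rw [Finset.sum_const, nsmul_eq_mul, mul_one]
    refine mul_le_mul_of_nonneg_left (Real.sqrt_le_sqrt ?_) (Real.sqrt_nonneg _)
    -- the sum counts each point of `U` in a class meeting `U₁` once
    have h2 : ∀ b ∈ U₁.filter Q, ((cls U f b).card : ℝ) * ((cls U₁ f b).card : ℝ)⁻¹ =
        ∑ c ∈ U.filter Q, if f c b then ((cls U₁ f b).card : ℝ)⁻¹ else 0 := by
      intro b hb
      rw [← Finset.sum_filter, Finset.sum_const, nsmul_eq_mul]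
      congr 3
      ext c
      simp only [mem_cls, Finset.mem_filter]
      constructor
      · rintro ⟨h3, h4⟩
        exact ⟨⟨h3, hQ b c (f.symm h4) (Finset.mem_filter.1 hb).2⟩, h4⟩
      · rintro ⟨⟨h3, _⟩, h4⟩; exact ⟨h3, h4⟩
    rw [Finset.sum_congr rfl h2, Finset.sum_comm, Finset.card_eq_sum_ones, Nat.cast_sum]
    refine Finset.sum_le_sum fun c hc => ?_
    rw [← Finset.sum_filter, Nat.cast_one]
    by_cases hne : ((U₁.filter Q).filter fun b => f c b).Nonempty
    · obtain ⟨b₀, hb₀⟩ := hne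
      have hb₀' := Finset.mem_filter.1 hb₀
      have h5 : ∀ b ∈ (U₁.filter Q).filter fun b => f c b, ((cls U₁ f b).card : ℝ)⁻¹ =
          ((cls U₁ f b₀).card : ℝ)⁻¹ := by
        intro b hb
        rw [cls_eq (f.trans (f.symm (Finset.mem_filter.1 hb).2) hb₀'.2)]
      rw [Finset.sum_congr rfl h5, Finset.sum_const, nsmul_eq_mul]
      have hp : (0 : ℝ) < (cls U₁ f b₀).card := cls_pos (Finset.mem_filter.1 hb₀'.1).1
      rw [mul_inv_le_iff₀ hp, one_mul]
      have : ((U₁.filter Q).filter fun b => f c b) ⊆ cls U₁ f b₀ := by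
        intro b hb
        have hb' := Finset.mem_filter.1 hb
        exact mem_cls.2 ⟨(Finset.mem_filter.1 hb'.1).1, f.trans (f.symm hb'.2) hb₀'.2⟩
      exact_mod_cast Finset.card_le_card this
    · rw [Finset.not_nonempty_iff_eq_empty.1 hne, Finset.sum_empty]
      exact zero_le_one
  have hS' : ∀ b c, f b c → ¬ S b → ¬ S c := fun b c hbc hb hc => hb (hS c b (f.symm hbc) hc)
  have hsum := Finset.sum_le_sum hterm
  rw [Finset.sum_sub_distrib, Finset.sum_const, nsmul_eq_mul, ← Finset.mul_sum,
    ← Finset.sum_mul] at hsum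
  have hspl : ∑ b ∈ U₁, √((cls U f b).card : ℝ) * √(((cls U₁ f b).card : ℝ)⁻¹) =
      ∑ b ∈ U₁.filter S, √((cls U f b).card : ℝ) * √(((cls U₁ f b).card : ℝ)⁻¹) +
      ∑ b ∈ U₁.filter fun b => ¬ S b, √((cls U f b).card : ℝ) * √(((cls U₁ f b).card : ℝ)⁻¹) := by
    rw [← Finset.sum_filter_add_sum_filter_not U₁ S]
  rw [hspl] at hsum
  have c1 := hcs S hS
  have c2 := hcs (fun b => ¬ S b) hS'
  have hfac : ∀ p q : ℝ, 0 ≤ p → 0 ≤ q → √(p / U₁.card * (q / U.card)) =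
      (U₁.card : ℝ)⁻¹ * (√p * √q * √(U₁.card / U.card : ℝ)) := by
    intro p q hp hq
    rw [← Real.sqrt_mul hp, ← Real.sqrt_mul (by positivity), ← Real.sqrt_sq (inv_nonneg.2 hU₁pos.le),
      ← Real.sqrt_mul (by positivity)]
    congr 1
    field_simp
  rw [hfac _ _ (by positivity) (by positivity), hfac _ _ (by positivity) (by positivity)]
  rw [dKL, ← hU₁]
  have h6 : 0 ≤ √(U₁.card / U.card : ℝ) := Real.sqrt_nonneg _
  have h7 := mul_le_mul_of_nonneg_right (add_le_add c1 c2) h6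
  have h8 := mul_le_mul_of_nonneg_left hsum (inv_nonneg.2 hU₁pos.le)
  refine le_trans ?_ h8
  have h9 := mul_le_mul_of_nonneg_left h7 (inv_nonneg.2 hU₁pos.le)
  have h10 : (U₁.card : ℝ)⁻¹ * (U₁.card * 2) = 2 := by field_simp
  rw [mul_sub, h10]
  linarith

lemma dKL_nonneg (A : Finset α) (f g h : Setoid α) {a : α} (ha : a ∈ A) : 0 ≤ dKL A f g h a := by
  have := hellinger_le_dKL A f g h ha (fun _ => True) (fun _ _ _ _ => trivial)
  have p1 := cls_pos (r := h) ha
  have p2 := cls_pos (r := g ⊓ h) ha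
  simpa [div_self p1.ne', div_self p2.ne'] using this

lemma mI_nonneg (A : Finset α) (f g h : Setoid α) : 0 ≤ mI A f g h := by
  rw [mI_eq_sum_dKL]
  exact Finset.sum_nonneg fun a ha => dKL_nonneg A f g h ha

/-- A Pinsker-type inequality: small relative entropy makes the two distributions of `f` close. -/
lemma abs_sub_le_of_dKL (A : Finset α) (f g h : Setoid α) {a : α} (ha : a ∈ A) (S : α → Prop)
    (hS : ∀ b c, f b c → S b → S c) {β : ℝ} (hβ : 0 ≤ β) (hd : dKL A f g h a ≤ β ^ 2) :
    |(((cls A (g ⊓ h) a).filter S).card / (cls A (g ⊓ h) a).card : ℝ) -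
      ((cls A h a).filter S).card / (cls A h a).card| ≤ 2 * β := by
  have hh := hellinger_le_dKL A f g h ha S hS
  have p1 := cls_pos (r := h) ha
  have p2 := cls_pos (r := g ⊓ h) ha
  have comp : ∀ V : Finset α, (0 : ℝ) < V.card →
      ((V.filter fun b => ¬ S b).card / V.card : ℝ) = 1 - (V.filter S).card / V.card := by
    intro V hV
    have : (V.filter S).card + (V.filter fun b => ¬ S b).card = V.card :=
      Finset.card_filter_add_card_filter_not S
    have h2 : ((V.filter S).card : ℝ) + (V.filter fun b => ¬ S b).card = V.card := by
      exact_mod_cast this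
    field_simp
    linarith
  rw [comp _ p1, comp _ p2] at hh
  have le1 : ∀ V : Finset α, (0 : ℝ) < V.card → ((V.filter S).card / V.card : ℝ) ≤ 1 := by
    intro V hV
    rw [div_le_one hV]
    exact_mod_cast Finset.card_filter_le _ _
  have l1 := le1 _ p1
  have l2 := le1 _ p2
  have n1 : (0 : ℝ) ≤ ((cls A h a).filter S).card / (cls A h a).card := by positivity
  have n2 : (0 : ℝ) ≤ ((cls A (g ⊓ h) a).filter S).card / (cls A (g ⊓ h) a).card := by positivity
  set p : ℝ := ((cls A (g ⊓ h) a).filter S).card / (cls A (g ⊓ h) a).card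
  set q : ℝ := ((cls A h a).filter S).card / (cls A h a).card
  rw [Real.sqrt_mul n2, Real.sqrt_mul (by linarith)] at hh
  have s1 := Real.sq_sqrt n1
  have s2 := Real.sq_sqrt n2
  have s3 := Real.sq_sqrt (show 0 ≤ 1 - q by linarith)
  have s4 := Real.sq_sqrt (show 0 ≤ 1 - p by linarith)
  have hsq : (√p - √q) ^ 2 ≤ β ^ 2 := by nlinarith [sq_nonneg (√(1 - p) - √(1 - q))]
  have h1 := abs_le_of_sq_le_sq hsq hβ
  have e : p - q = (√p - √q) * (√p + √q) := by ring_nf; rw [s1, s2]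
  have b1 : √p ≤ 1 := Real.sqrt_le_one.2 l2
  have b2 : √q ≤ 1 := Real.sqrt_le_one.2 l1
  rw [e, abs_mul, abs_of_nonneg (add_nonneg (Real.sqrt_nonneg p) (Real.sqrt_nonneg q)), mul_comm 2]
  exact mul_le_mul h1 (by linarith) (by positivity) hβ

/-- Markov's inequality for the relative entropies of the classes. -/
lemma card_dKL_gt (A : Finset α) (f g h : Setoid α) {κ : ℝ} :
    κ * ((A.filter fun a => κ < dKL A f g h a).card : ℝ) ≤ mI A f g h := by
  rw [mI_eq_sum_dKL, mul_comm, ← nsmul_eq_mul]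
  refine (Finset.card_nsmul_le_sum _ _ κ fun a ha => (Finset.mem_filter.1 ha).2.le).trans ?_
  exact Finset.sum_le_sum_of_subset_of_nonneg (Finset.filter_subset _ _)
    fun a ha _ => dKL_nonneg A f g h ha

lemma dKL_congr (A : Finset α) (f g h : Setoid α) {a b : α} (hab : (g ⊓ h) a b) :
    dKL A f g h a = dKL A f g h b := by
  unfold dKL
  rw [cls_eq hab]

/-! ### Consequences of submodularity -/

lemma mI_mono (A : Finset α) {f g g' h : Setoid α} (hg : g ≤ g') :
    mI A f g' h ≤ mI A f g h := by
  have h0 := mI_nonneg A f g (g' ⊓ h)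
  unfold mI at *
  have e1 : f ⊓ g ⊓ (g' ⊓ h) = f ⊓ g ⊓ h := by
    rw [← inf_assoc, inf_assoc f g g', inf_eq_left.2 hg]
  have e2 : g ⊓ (g' ⊓ h) = g ⊓ h := by rw [← inf_assoc, inf_eq_left.2 hg]
  rw [e1, e2, ← inf_assoc] at h0
  linarith

lemma cH_nonneg (A : Finset α) (f g : Setoid α) : 0 ≤ cH A f g :=
  sub_nonneg.2 (G_mono A inf_le_right)

/-- Conditioning reduces entropy. -/
lemma cH_anti (A : Finset α) {f g g' : Setoid α} (hg : g ≤ g') : cH A f g ≤ cH A f g' := by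
  have := mI_nonneg A f g g'
  unfold mI at this
  unfold cH
  have e : f ⊓ g ⊓ g' = f ⊓ g := by rw [inf_assoc, inf_eq_left.2 hg]
  rw [e, inf_eq_left.2 hg] at this
  linarith

lemma cH_inf_le (A : Finset α) (f₁ f₂ g : Setoid α) :
    cH A (f₁ ⊓ f₂) g ≤ cH A f₁ g + cH A f₂ g := by
  have := mI_nonneg A f₁ f₂ g
  unfold mI at this
  unfold cH
  linarith

lemma G_le_add_cH (A : Finset α) (f g : Setoid α) : G A g ≤ G A f + cH A f g := by
  have : G A (f ⊓ g) ≤ G A f := G_mono A inf_le_left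
  unfold cH
  linarith

/-- Replacing the condition `x` by the finer condition `x ⊓ z ⊓ K` increases mutual information
by at most the entropy of `z` given `X ⊓ K`. -/
lemma mI_context (A : Finset α) {X x Y K W z : Setoid α} (hX : X ≤ x) (hY : Y ≤ K) (hW : W ≤ Y) :
    mI A X Y (x ⊓ z ⊓ K) ≤ mI A X W x + cH A z (X ⊓ K) := by
  have h1 : mI A X Y x ≤ mI A X W x := mI_mono A hW
  have h2 : 0 ≤ mI A X K x := mI_nonneg A X K x
  have h3 : cH A z (Y ⊓ x) ≤ cH A z (x ⊓ K) :=
    cH_anti A (le_inf inf_le_right (inf_le_left.trans hY))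
  have h4 : 0 ≤ cH A z (X ⊓ Y) := cH_nonneg A _ _
  unfold mI cH at *
  have e1 : X ⊓ Y ⊓ (x ⊓ z ⊓ K) = z ⊓ (X ⊓ Y) := by
    apply le_antisymm
    · exact le_inf (inf_le_right.trans (inf_le_left.trans inf_le_right)) inf_le_left
    · exact le_inf inf_le_right (le_inf (le_inf (inf_le_right.trans (inf_le_left.trans hX))
        inf_le_left) (inf_le_right.trans (inf_le_right.trans hY)))
  have e2 : X ⊓ (x ⊓ z ⊓ K) = z ⊓ (X ⊓ K) := by
    apply le_antisymm
    · exact le_inf (inf_le_right.trans (inf_le_left.trans inf_le_right))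
        (le_inf inf_le_left (inf_le_right.trans inf_le_right))
    · exact le_inf (inf_le_right.trans inf_le_left) (le_inf (le_inf (inf_le_right.trans
        (inf_le_left.trans hX)) inf_le_left) (inf_le_right.trans inf_le_right))
  have e3 : Y ⊓ (x ⊓ z ⊓ K) = z ⊓ (Y ⊓ x) := by
    apply le_antisymm
    · exact le_inf (inf_le_right.trans (inf_le_left.trans inf_le_right))
        (le_inf inf_le_left (inf_le_right.trans (inf_le_left.trans inf_le_left)))
    · exact le_inf (inf_le_right.trans inf_le_left) (le_inf (le_inf (inf_le_right.trans
        inf_le_right) inf_le_left) (inf_le_right.trans (inf_le_left.trans hY)))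
  have e4 : z ⊓ (x ⊓ K) = x ⊓ z ⊓ K := by rw [← inf_assoc, inf_comm z x]
  have e5 : X ⊓ Y ⊓ x = X ⊓ Y := inf_eq_left.2 (inf_le_left.trans hX)
  have e6 : X ⊓ x = X := inf_eq_left.2 hX
  have e7 : X ⊓ K ⊓ x = X ⊓ K := inf_eq_left.2 (inf_le_left.trans hX)
  rw [e1, e2, e3]
  rw [e6]
  rw [e4] at h3
  rw [e5, e6] at h1
  rw [e7, e6, inf_comm K x] at h2
  linarith

/-- Adding the condition `z` costs at most the entropy of `z`. -/
lemma cH_context (A : Finset α) {f K x X z : Setoid α} (hX : X ≤ x) :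
    cH A f (K ⊓ X) ≤ cH A f (x ⊓ z ⊓ K) + cH A z (x ⊓ K) := by
  have h1 : cH A f (K ⊓ X) ≤ cH A f (x ⊓ K) :=
    cH_anti A (le_inf (inf_le_right.trans hX) inf_le_left)
  have h2 : G A (f ⊓ (x ⊓ z ⊓ K)) ≤ G A (f ⊓ (x ⊓ K)) :=
    G_mono A (inf_le_inf_left _ (inf_le_inf_right _ inf_le_left))
  have e4 : z ⊓ (x ⊓ K) = x ⊓ z ⊓ K := by rw [← inf_assoc, inf_comm z x]
  unfold cH at *
  rw [e4]
  linarith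

end Entropy

end AssouadProj

/-! ### Dyadic partitions of the plane -/

namespace AssouadProj

section Grid

open scoped Classical

/-- The projection of slope `θ`, a multiple of an orthogonal projection. -/
def xi (θ : ℝ) (p : ℝ × ℝ) : ℝ := p.1 + θ * p.2

/-- The partition of the plane into dyadic squares of side `2 ^ (-n)`. -/
def D (n : ℕ) : Setoid (ℝ × ℝ) := Setoid.ker fun p => (⌊2 ^ n * p.1⌋, ⌊2 ^ n * p.2⌋)

/-- The partition of the plane into strips: preimages under `xi θ` of the dyadic intervals of
length `2 ^ (-n)`, translated by the offset `-u`. -/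
def P (θ u : ℝ) (n : ℕ) : Setoid (ℝ × ℝ) := Setoid.ker fun p => ⌊2 ^ n * (xi θ p + u)⌋

/-- Quantitative form of `dim_A (xi θ (A)) ≤ s`, through cardinalities of separated subsets. -/
def Hom (C s θ : ℝ) (A : Finset (ℝ × ℝ)) : Prop :=
  ∀ (x R r : ℝ) (T : Finset (ℝ × ℝ)), 0 < r → r ≤ R → T ⊆ A → (∀ a ∈ T, |xi θ a - x| ≤ R) →
    (∀ a ∈ T, ∀ b ∈ T, a ≠ b → r < |xi θ a - xi θ b|) → (T.card : ℝ) ≤ C * (R / r) ^ s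

lemma Hom.mono {C s θ : ℝ} {A B : Finset (ℝ × ℝ)} (h : Hom C s θ B) (hAB : A ⊆ B) : Hom C s θ A :=
  fun x R r T hr hR hT => h x R r T hr hR (hT.trans hAB)

lemma D_iff {n : ℕ} {p q : ℝ × ℝ} :
    D n p q ↔ ⌊2 ^ n * p.1⌋ = ⌊2 ^ n * q.1⌋ ∧ ⌊2 ^ n * p.2⌋ = ⌊2 ^ n * q.2⌋ := by
  exact Prod.mk_inj

lemma P_iff {θ u : ℝ} {n : ℕ} {p q : ℝ × ℝ} :
    P θ u n p q ↔ ⌊2 ^ n * (xi θ p + u)⌋ = ⌊2 ^ n * (xi θ q + u)⌋ := by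
  exact Iff.rfl

lemma floor_half {s t : ℝ} {n : ℕ} (h : ⌊2 ^ (n + 1) * s⌋ = ⌊2 ^ (n + 1) * t⌋) :
    ⌊2 ^ n * s⌋ = ⌊2 ^ n * t⌋ := by
  have key : ∀ x : ℝ, ⌊2 ^ n * x⌋ = ⌊2 ^ (n + 1) * x⌋ / 2 := by
    intro x
    have h1 := Int.floor_le (2 ^ n * x)
    have h2 := Int.lt_floor_add_one (2 ^ n * x)
    have h3 : 2 * ⌊2 ^ n * x⌋ ≤ ⌊2 ^ (n + 1) * x⌋ := by
      rw [Int.le_floor]; push_cast; rw [pow_succ]; linarith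
    have h4 : ⌊2 ^ (n + 1) * x⌋ < 2 * ⌊2 ^ n * x⌋ + 2 := by
      rw [Int.floor_lt]; push_cast; rw [pow_succ]; linarith
    omega
  rw [key s, key t, h]

lemma D_anti : Antitone D := by
  refine antitone_nat_of_succ_le fun n p q h => ?_
  rw [D_iff] at h ⊢
  exact ⟨floor_half h.1, floor_half h.2⟩

lemma P_anti (θ u : ℝ) : Antitone (P θ u) := by
  refine antitone_nat_of_succ_le fun n p q h => ?_
  rw [P_iff] at h ⊢
  exact floor_half h

lemma abs_lt_of_floor {s t : ℝ} {n : ℕ} (h : ⌊2 ^ n * s⌋ = ⌊2 ^ n * t⌋) :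
    2 ^ n * |s - t| < 1 := by
  have := Int.abs_sub_lt_one_of_floor_eq_floor h
  rwa [← mul_sub, abs_mul, abs_of_pos (by positivity)] at this

lemma D_fst {n : ℕ} {p q : ℝ × ℝ} (h : D n p q) : 2 ^ n * |p.1 - q.1| < 1 :=
  abs_lt_of_floor (D_iff.1 h).1

lemma D_snd {n : ℕ} {p q : ℝ × ℝ} (h : D n p q) : 2 ^ n * |p.2 - q.2| < 1 :=
  abs_lt_of_floor (D_iff.1 h).2

lemma P_abs {θ u : ℝ} {n : ℕ} {p q : ℝ × ℝ} (h : P θ u n p q) :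
    2 ^ n * |xi θ p - xi θ q| < 1 := by
  have := abs_lt_of_floor (P_iff.1 h)
  rwa [add_sub_add_right_eq_sub] at this

lemma card_floor_le {α : Type*} (T : Finset α) (t : α → ℝ) (M : ℕ)
    (h : ∀ a ∈ T, ∀ b ∈ T, |t a - t b| ≤ M) : (T.image fun a => ⌊t a⌋).card ≤ 2 * M + 1 := by
  rcases T.eq_empty_or_nonempty with rfl | ⟨a, ha⟩
  · simp
  have hsub : (T.image fun a => ⌊t a⌋) ⊆ Finset.Icc (⌊t a⌋ - M) (⌊t a⌋ + M) := by
    intro k hk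
    obtain ⟨b, hb, rfl⟩ := Finset.mem_image.1 hk
    have := abs_le.1 (h a ha b hb)
    have h1 := Int.floor_le (t a)
    have h2 := Int.lt_floor_add_one (t a)
    rw [Finset.mem_Icc]
    constructor
    · rw [Int.le_floor]; push_cast; linarith
    · rw [← Int.lt_add_one_iff, Int.floor_lt]; push_cast; linarith
  refine (Finset.card_le_card hsub).trans ?_
  rw [Int.card_Icc]
  omega

lemma cH_floor {α : Type*} (A : Finset α) (t : α → ℝ) (g : Setoid α) (M : ℕ)
    (h : ∀ a ∈ A, ∀ b ∈ A, g a b → |t a - t b| ≤ M) :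
    cH A (Setoid.ker fun a => ⌊t a⌋) g ≤ A.card * Real.log (2 * M + 1) := by
  refine (cH_le A _ g (fun _ => 2 * M + 1) (fun _ _ => by positivity) (fun _ _ _ _ _ => rfl)
    fun a _ => ?_).trans_eq (by rw [Finset.sum_const, nsmul_eq_mul])
  exact_mod_cast card_floor_le (cls A g a) t M fun b hb c hc =>
    h b (mem_cls.1 hb).1 c (mem_cls.1 hc).1 (g.trans (mem_cls.1 hb).2 (g.symm (mem_cls.1 hc).2))

lemma cH_P_D (A : Finset (ℝ × ℝ)) {θ : ℝ} (u : ℝ) (n : ℕ) {Θ : ℕ} (hθ : |θ| ≤ Θ) :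
    cH A (P θ u n) (D n) ≤ A.card * Real.log (2 * Θ + 3) := by
  have := cH_floor A (fun p => 2 ^ n * (xi θ p + u)) (D n) (1 + Θ) fun a _ b _ hab => by
    have h1 := D_fst hab
    have h2 := D_snd hab
    have e : 2 ^ n * (xi θ a + u) - 2 ^ n * (xi θ b + u) =
        2 ^ n * (a.1 - b.1) + θ * (2 ^ n * (a.2 - b.2)) := by unfold xi; ring
    rw [e]
    refine (abs_add_le _ _).trans ?_
    rw [abs_mul, abs_mul θ, abs_mul, abs_of_pos (by positivity : (0 : ℝ) < 2 ^ n)]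
    push_cast
    have := mul_le_mul hθ h2.le (by positivity) (by positivity)
    linarith
  rwa [show 2 * ((1 + Θ : ℕ) : ℝ) + 1 = 2 * Θ + 3 by push_cast; ring] at this

/-- For nearby slopes the strips agree, up to bounded entropy, inside a dyadic square. -/
lemma cH_P_P (A : Finset (ℝ × ℝ)) {θ θ' : ℝ} (u u' : ℝ) (n l : ℕ)
    (h : |θ' - θ| * 2 ^ l ≤ 1) {g : Setoid (ℝ × ℝ)} (h1 : g ≤ P θ u (n + l)) (h2 : g ≤ D n) :
    cH A (P θ' u' (n + l)) g ≤ A.card * Real.log 5 := by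
  have := cH_floor A (fun p => 2 ^ (n + l) * (xi θ' p + u')) g 2 fun a _ b _ hab => by
    have h3 := P_abs (h1 hab)
    have h4 := D_snd (h2 hab)
    have e : 2 ^ (n + l) * (xi θ' a + u') - 2 ^ (n + l) * (xi θ' b + u') =
        2 ^ (n + l) * (xi θ a - xi θ b) + (θ' - θ) * 2 ^ l * (2 ^ n * (a.2 - b.2)) := by
      unfold xi; ring
    rw [e]
    refine (abs_add_le _ _).trans ?_
    rw [abs_mul, abs_mul ((θ' - θ) * 2 ^ l), abs_mul, abs_mul (2 ^ n),
      abs_of_pos (by positivity : (0 : ℝ) < 2 ^ (n + l)),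
      abs_of_pos (by positivity : (0 : ℝ) < 2 ^ l), abs_of_pos (by positivity : (0 : ℝ) < 2 ^ n)]
    have := mul_le_mul h h4.le (by positivity) zero_le_one
    push_cast
    linarith
  rwa [show 2 * ((2 : ℕ) : ℝ) + 1 = 5 by norm_num] at this

lemma card_D_image_le (T : Finset (ℝ × ℝ)) (n M N : ℕ)
    (h1 : ∀ a ∈ T, ∀ b ∈ T, 2 ^ n * |a.1 - b.1| ≤ M)
    (h2 : ∀ a ∈ T, ∀ b ∈ T, 2 ^ n * |a.2 - b.2| ≤ N) :
    (T.image fun p => (⌊2 ^ n * p.1⌋, ⌊2 ^ n * p.2⌋)).card ≤ (2 * M + 1) * (2 * N + 1) := by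
  have hp : (0 : ℝ) < 2 ^ n := by positivity
  have c1 := card_floor_le T (fun p => 2 ^ n * p.1) M fun a ha b hb => by
    rw [← mul_sub, abs_mul, abs_of_pos hp]; exact h1 a ha b hb
  have c2 := card_floor_le T (fun p => 2 ^ n * p.2) N fun a ha b hb => by
    rw [← mul_sub, abs_mul, abs_of_pos hp]; exact h2 a ha b hb
  refine le_trans (Finset.card_le_card (t := (T.image fun p => ⌊2 ^ n * p.1⌋) ×ˢ
    (T.image fun p => ⌊2 ^ n * p.2⌋)) ?_) ?_
  · intro k hk
    obtain ⟨b, hb, rfl⟩ := Finset.mem_image.1 hk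
    exact Finset.mem_product.2 ⟨Finset.mem_image_of_mem _ hb, Finset.mem_image_of_mem _ hb⟩
  · rw [Finset.card_product]
    exact Nat.mul_le_mul c1 c2

/-- The logarithm of the number of dyadic squares of level `n + a` met by one of level `n`
is at most `dlog a`. -/
def dlog (a : ℕ) : ℝ := Real.log ((2 * 2 ^ a + 1) * (2 * 2 ^ a + 1))

lemma dlog_nonneg (a : ℕ) : 0 ≤ dlog a := by
  refine Real.log_nonneg ?_
  have : (1 : ℝ) ≤ 2 ^ a := one_le_pow₀ (by norm_num)
  nlinarith

lemma card_D_D {T : Finset (ℝ × ℝ)} {n : ℕ} (a : ℕ) (h : ∀ b ∈ T, ∀ c ∈ T, D n b c) :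
    ((T.image fun p => (⌊2 ^ (n + a) * p.1⌋, ⌊2 ^ (n + a) * p.2⌋)).card : ℝ) ≤
      (2 * 2 ^ a + 1) * (2 * 2 ^ a + 1) := by
  have hp : (0 : ℝ) < 2 ^ a := by positivity
  exact_mod_cast card_D_image_le T (n + a) (2 ^ a) (2 ^ a)
    (fun b hb c hc => by
      have := mul_le_mul_of_nonneg_left (D_fst (h b hb c hc)).le hp.le
      push_cast; rw [pow_add]; linarith)
    (fun b hb c hc => by
      have := mul_le_mul_of_nonneg_left (D_snd (h b hb c hc)).le hp.le
      push_cast; rw [pow_add]; linarith)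

lemma cH_D_D (A : Finset (ℝ × ℝ)) (n a : ℕ) : cH A (D (n + a)) (D n) ≤ A.card * dlog a := by
  refine (cH_le A _ (D n) (fun _ => (2 * 2 ^ a + 1) * (2 * 2 ^ a + 1)) (fun _ _ => by positivity)
    (fun _ _ _ _ _ => rfl) fun c _ => ?_).trans_eq (by rw [Finset.sum_const, nsmul_eq_mul]; rfl)
  exact card_D_D a fun b hb d hd =>
    (D n).trans (mem_cls.1 hb).2 ((D n).symm (mem_cls.1 hd).2)

end Grid

end AssouadProj

namespace AssouadProj

/-! ### Approximate translation invariance forces a large projection -/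

section Local

open scoped Classical

variable {α : Type*}

/-- The proportion of points of `U` satisfying `p`. -/
def frac (U : Finset α) (p : α → Prop) : ℝ := (U.filter p).card / U.card

lemma frac_mono {U : Finset α} {p q : α → Prop} (h : ∀ a ∈ U, p a → q a) :
    frac U p ≤ frac U q := by
  unfold frac
  gcongr with a ha
  exact h a ha

/-- The union of the `f`-classes meeting `p`. -/
def sat (f : Setoid α) (p : α → Prop) (c : α) : Prop := ∃ b, f b c ∧ p b

lemma sat_sat (f : Setoid α) (p : α → Prop) (b c : α) (h : f b c) (hb : sat f p b) :
    sat f p c := by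
  obtain ⟨d, hd, hp⟩ := hb
  exact ⟨d, f.trans hd h, hp⟩

lemma frac_up (A : Finset α) (f g h : Setoid α) {a : α} (ha : a ∈ A) (p : α → Prop) {κ : ℝ}
    (hκ : 0 ≤ κ) (hd : dKL A f g h a ≤ κ ^ 2) :
    frac (cls A h a) p ≤ frac (cls A (g ⊓ h) a) (sat f p) + 2 * κ := by
  have h1 := (abs_le.1 (abs_sub_le_of_dKL A f g h ha (sat f p) (sat_sat f p) hκ hd)).1
  have h2 : frac (cls A h a) p ≤ frac (cls A h a) (sat f p) :=
    frac_mono fun b _ hb => ⟨b, f.refl b, hb⟩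
  unfold frac at *
  linarith

lemma frac_down (A : Finset α) (f g h : Setoid α) {a : α} (ha : a ∈ A) (p : α → Prop) {κ : ℝ}
    (hκ : 0 ≤ κ) (hd : dKL A f g h a ≤ κ ^ 2) :
    frac (cls A (g ⊓ h) a) p ≤ frac (cls A h a) (sat f p) + 2 * κ := by
  have h1 := (abs_le.1 (abs_sub_le_of_dKL A f g h ha (sat f p) (sat_sat f p) hκ hd)).2
  have h2 : frac (cls A (g ⊓ h) a) p ≤ frac (cls A (g ⊓ h) a) (sat f p) :=
    frac_mono fun b _ hb => ⟨b, f.refl b, hb⟩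
  unfold frac at *
  linarith

/-- If in the class `[a₁] = [a₂]` of `h` the distributions of `xi θ` and of `xi θ'` hardly change
under conditioning on the `Y`-class of `a₁` or `a₂`, then the distribution of `xi θ` is nearly
invariant under the translation by `(θ' - θ) (y₁ - y₂)`: moving from `a₁` to `a₂` in the fibre
changes the relation between the two projections by exactly this translation. -/
lemma frac_step (A : Finset (ℝ × ℝ)) {θ θ' σ σ' κ : ℝ} {X Z Y h : Setoid (ℝ × ℝ)}
    (hX : ∀ b c, X b c → |xi θ b - xi θ c| ≤ σ) (hZ : ∀ b c, Z b c → |xi θ' b - xi θ' c| ≤ σ)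
    (hY : ∀ b c, Y b c → |(θ' - θ) * (b.2 - c.2)| ≤ σ') (hκ : 0 ≤ κ)
    {a₁ a₂ : ℝ × ℝ} (h₁ : a₁ ∈ A) (h₂ : a₂ ∈ A) (h12 : h a₁ a₂)
    (x₁ : dKL A X Y h a₁ ≤ κ ^ 2) (x₂ : dKL A X Y h a₂ ≤ κ ^ 2)
    (z₁ : dKL A Z Y h a₁ ≤ κ ^ 2) (z₂ : dKL A Z Y h a₂ ≤ κ ^ 2) (S : ℝ → Prop) :
    frac (cls A h a₁) (fun c => S (xi θ c)) ≤
      frac (cls A h a₁) (fun c => ∃ s, S s ∧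
        |xi θ c - s - (θ' - θ) * (a₁.2 - a₂.2)| ≤ 4 * σ + 2 * σ') + 8 * κ := by
  have rel : ∀ b c : ℝ × ℝ, xi θ' b = xi θ b + (θ' - θ) * b.2 := by
    intro b _; unfold xi; ring
  have s1 := frac_up A X Y h h₁ (fun c => S (xi θ c)) hκ x₁
  have m1 : frac (cls A (Y ⊓ h) a₁) (sat X fun c => S (xi θ c)) ≤ frac (cls A (Y ⊓ h) a₁)
      (fun c => ∃ s, S s ∧ |xi θ' c - (θ' - θ) * a₁.2 - s| ≤ σ + σ') := by
    refine frac_mono fun c hc hs => ?_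
    obtain ⟨b, hb, hSb⟩ := hs
    refine ⟨xi θ b, hSb, ?_⟩
    have e1 := abs_le.1 (hX b c hb)
    have e2 := abs_le.1 (hY c a₁ (mem_cls.1 hc).2.1)
    rw [rel c c, abs_le]
    constructor <;> linarith [e1.1, e1.2, e2.1, e2.2]
  have s2 := frac_down A Z Y h h₁
    (fun c => ∃ s, S s ∧ |xi θ' c - (θ' - θ) * a₁.2 - s| ≤ σ + σ') hκ z₁
  have s3 := frac_up A Z Y h h₂ (sat Z
    (fun c => ∃ s, S s ∧ |xi θ' c - (θ' - θ) * a₁.2 - s| ≤ σ + σ')) hκ z₂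
  have m2 : frac (cls A (Y ⊓ h) a₂) (sat Z (sat Z (fun c => ∃ s, S s ∧
      |xi θ' c - (θ' - θ) * a₁.2 - s| ≤ σ + σ'))) ≤ frac (cls A (Y ⊓ h) a₂)
      (fun c => ∃ s, S s ∧ |xi θ c - s - (θ' - θ) * (a₁.2 - a₂.2)| ≤ 3 * σ + 2 * σ') := by
    refine frac_mono fun c hc hs => ?_
    obtain ⟨b, hb, d, hd, s, hS, hsd⟩ := hs
    refine ⟨s, hS, ?_⟩
    have e1 := abs_le.1 (hZ b c hb)
    have e3 := abs_le.1 (hZ d b hd)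
    have e2 := abs_le.1 (hY c a₂ (mem_cls.1 hc).2.1)
    have e4 := abs_le.1 hsd
    rw [rel c c] at e1
    rw [abs_le]
    constructor <;> linarith [e1.1, e1.2, e2.1, e2.2, e3.1, e3.2, e4.1, e4.2]
  have s4 := frac_down A X Y h h₂
    (fun c => ∃ s, S s ∧ |xi θ c - s - (θ' - θ) * (a₁.2 - a₂.2)| ≤ 3 * σ + 2 * σ') hκ x₂
  have m3 : frac (cls A h a₂) (sat X (fun c => ∃ s, S s ∧
      |xi θ c - s - (θ' - θ) * (a₁.2 - a₂.2)| ≤ 3 * σ + 2 * σ')) ≤ frac (cls A h a₂)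
      (fun c => ∃ s, S s ∧ |xi θ c - s - (θ' - θ) * (a₁.2 - a₂.2)| ≤ 4 * σ + 2 * σ') := by
    refine frac_mono fun c hc hs => ?_
    obtain ⟨b, hb, s, hS, hsd⟩ := hs
    refine ⟨s, hS, ?_⟩
    have e1 := abs_le.1 (hX b c hb)
    have e4 := abs_le.1 hsd
    rw [abs_le]
    constructor <;> linarith [e1.1, e1.2, e4.1, e4.2]
  rw [← cls_eq (A := A) h12] at s3 s4 m3
  linarith

/-- Near translation invariance of the distribution of `xi θ` on a class produces a long
approximate arithmetic progression in the projection, which `Hom` forbids. -/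
lemma no_two_good (A : Finset (ℝ × ℝ)) {θ θ' σ σ' κ C s : ℝ} {X Z Y h : Setoid (ℝ × ℝ)}
    (hA : Hom C s θ A) (J : ℕ) (hJ : C * (4 * J) ^ s < J / 2) (hκJ : 8 * κ * J ≤ 1 / 2)
    (hσ : 0 ≤ σ) (hσ' : 0 ≤ σ')
    (hX : ∀ b c, X b c → |xi θ b - xi θ c| ≤ σ) (hZ : ∀ b c, Z b c → |xi θ' b - xi θ' c| ≤ σ)
    (hY : ∀ b c, Y b c → |(θ' - θ) * (b.2 - c.2)| ≤ σ') (hκ : 0 ≤ κ)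
    {a₁ a₂ : ℝ × ℝ} (h₁ : a₁ ∈ A) (h₂ : a₂ ∈ A) (h12 : h a₁ a₂)
    (x₁ : dKL A X Y h a₁ ≤ κ ^ 2) (x₂ : dKL A X Y h a₂ ≤ κ ^ 2)
    (z₁ : dKL A Z Y h a₁ ≤ κ ^ 2) (z₂ : dKL A Z Y h a₂ ≤ κ ^ 2)
    (hv : 0 < |(θ' - θ) * (a₁.2 - a₂.2)|)
    (hω : J * (4 * σ + 2 * σ') ≤ |(θ' - θ) * (a₁.2 - a₂.2)| / 4) : False := by
  set v := (θ' - θ) * (a₁.2 - a₂.2) with hvdef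
  set ω := 4 * σ + 2 * σ' with hωdef
  have hω0 : 0 ≤ ω := by positivity
  set U := cls A h a₁ with hU
  have hUpos : (0 : ℝ) < U.card := cls_pos h₁
  have hJ0 : 0 < J := by
    rcases Nat.eq_zero_or_pos J with rfl | h0
    · exfalso
      -- the singleton `{a₁}` bounds `C` from below
      have := hA (xi θ a₁) 1 1 {a₁} one_pos le_rfl (by simpa using h₁) (by simp) (by simp)
      simp only [Finset.card_singleton, Nat.cast_one, div_one, Real.one_rpow, mul_one,
        Nat.cast_zero, mul_zero, zero_div] at this hJ
      have h0 : (0 : ℝ) ≤ 0 ^ s := Real.rpow_nonneg le_rfl s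
      nlinarith
    · exact h0
  obtain ⟨E, hEdef⟩ : ∃ E : ℕ → (ℝ × ℝ) → Prop, ∀ i c, E i c ↔
      ∃ b ∈ U, |xi θ c - xi θ b - i * v| ≤ i * ω := ⟨_, fun _ _ => Iff.rfl⟩
  have hE : ∀ i : ℕ, 1 - 8 * κ * i ≤ frac U (E i) := by
    intro i
    induction i with
    | zero =>
      have : U.filter (E 0) = U := Finset.filter_true_of_mem fun c hc =>
        (hEdef 0 c).2 ⟨c, hc, by simp⟩
      rw [frac, this, div_self hUpos.ne']
      simp
    | succ i ih =>
      have := frac_step A hX hZ hY hκ h₁ h₂ h12 x₁ x₂ z₁ z₂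
        (fun t => ∃ b ∈ U, |t - xi θ b - i * v| ≤ i * ω)
      have m : frac U (fun c => ∃ s, (∃ b ∈ U, |s - xi θ b - i * v| ≤ i * ω) ∧
          |xi θ c - s - v| ≤ ω) ≤ frac U (E (i + 1)) := by
        refine frac_mono fun c _ hc => ?_
        obtain ⟨s, ⟨b, hb, hsb⟩, hs⟩ := hc
        refine (hEdef _ _).2 ⟨b, hb, ?_⟩
        have e1 := abs_le.1 hsb
        have e2 := abs_le.1 hs
        push_cast
        rw [abs_le]
        constructor <;> linarith [e1.1, e1.2, e2.1, e2.2]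
      push_cast
      have ih' : 1 - 8 * κ * i ≤ frac U (fun c => ∃ b ∈ U, |xi θ c - xi θ b - i * v| ≤ i * ω) :=
        ih.trans (frac_mono fun c _ => (hEdef i c).1)
      linarith
  -- some point lies in at least half of the sets `E i`
  obtain ⟨c, hc, hcJ⟩ : ∃ c ∈ U, (J / 2 : ℝ) ≤ ((Finset.range J).filter fun i => E i c).card := by
    by_contra hcon
    push Not at hcon
    have h1 : ∑ c ∈ U, (((Finset.range J).filter fun i => E i c).card : ℝ) < U.card * (J / 2) := by
      have := Finset.sum_lt_sum_of_nonempty (s := U) ⟨a₁, self_mem_cls h₁⟩ hcon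
      rwa [Finset.sum_const, nsmul_eq_mul] at this
    have h2 : ∑ c ∈ U, (((Finset.range J).filter fun i => E i c).card : ℝ) =
        ∑ i ∈ Finset.range J, ((U.filter fun c => E i c).card : ℝ) := by
      simp_rw [Finset.card_filter, Nat.cast_sum]
      exact Finset.sum_comm
    have h3 : ∑ i ∈ Finset.range J, ((U.card : ℝ) / 2) ≤
        ∑ i ∈ Finset.range J, ((U.filter fun c => E i c).card : ℝ) := by
      refine Finset.sum_le_sum fun i hi => ?_
      have hi' : (i : ℝ) ≤ J := by exact_mod_cast (Finset.mem_range.1 hi).le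
      have h4 := hE i
      rw [frac, le_div_iff₀ hUpos] at h4
      have h5 : 8 * κ * i ≤ 1 / 2 := le_trans (by gcongr) hκJ
      nlinarith
    rw [Finset.sum_const, Finset.card_range, nsmul_eq_mul] at h3
    linarith
  set I := (Finset.range J).filter fun i => E i c with hI
  have hex : ∀ i : ℕ, ∃ b, i ∈ I → b ∈ U ∧ |xi θ c - xi θ b - i * v| ≤ i * ω := by
    intro i
    by_cases hi : i ∈ I
    · obtain ⟨b, hb⟩ := (hEdef _ _).1 (Finset.mem_filter.1 hi).2
      exact ⟨b, fun _ => hb⟩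
    · exact ⟨c, fun h => absurd h hi⟩
  choose f hf using hex
  have hfω : ∀ i ∈ I, |xi θ c - xi θ (f i) - i * v| ≤ |v| / 4 := by
    intro i hi
    refine (hf i hi).2.trans (le_trans ?_ hω)
    have : (i : ℝ) ≤ J := by exact_mod_cast (Finset.mem_range.1 (Finset.mem_filter.1 hi).1).le
    gcongr
  have hsep : ∀ i ∈ I, ∀ k ∈ I, i ≠ k → |v| / 4 < |xi θ (f i) - xi θ (f k)| := by
    intro i hi k hk hik
    have e1 := hfω i hi
    have e2 := hfω k hk
    have h1 : (1 : ℝ) ≤ |(k : ℝ) - i| := by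
      have : (1 : ℤ) ≤ |(k : ℤ) - i| := Int.one_le_abs (by omega)
      exact_mod_cast this
    have h2 : |((k : ℝ) - i) * v| ≤ |xi θ (f i) - xi θ (f k)| +
        |xi θ c - xi θ (f i) - i * v| + |xi θ c - xi θ (f k) - k * v| := by
      have e : ((k : ℝ) - i) * v = (xi θ (f i) - xi θ (f k)) +
        (xi θ c - xi θ (f i) - i * v) - (xi θ c - xi θ (f k) - k * v) := by ring
      rw [e]
      exact (abs_sub _ _).trans (add_le_add (abs_add_le _ _) le_rfl)
    rw [abs_mul] at h2
    nlinarith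
  have hinj : Set.InjOn f I := by
    intro i hi k hk hik
    by_contra hne
    have := hsep i hi k hk hne
    rw [hik, sub_self, abs_zero] at this
    linarith
  have hJ1 : (1 : ℝ) ≤ J := by exact_mod_cast hJ0
  have hcard := hA (xi θ c) (J * |v|) (|v| / 4) (I.image f) (by positivity) (by nlinarith)
    (by
      intro b hb
      obtain ⟨i, hi, rfl⟩ := Finset.mem_image.1 hb
      exact cls_subset _ _ _ (hf i hi).1)
    (by
      intro b hb
      obtain ⟨i, hi, rfl⟩ := Finset.mem_image.1 hb
      have e1 := hfω i hi
      have hi1 : (i : ℝ) + 1 ≤ J := by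
        exact_mod_cast (Finset.mem_range.1 (Finset.mem_filter.1 hi).1)
      have e : xi θ (f i) - xi θ c = -(xi θ c - xi θ (f i) - i * v) - i * v := by ring
      rw [e]
      refine (abs_sub _ _).trans ?_
      rw [abs_neg, abs_mul, Nat.abs_cast]
      nlinarith)
    (by
      intro b hb d hd hbd
      obtain ⟨i, hi, rfl⟩ := Finset.mem_image.1 hb
      obtain ⟨k, hk, rfl⟩ := Finset.mem_image.1 hd
      exact hsep i hi k hk fun h => hbd (h ▸ rfl))
  rw [Finset.card_image_of_injOn hinj] at hcard
  have e : (J * |v|) / (|v| / 4) = 4 * J := by field_simp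
  rw [e] at hcard
  linarith

/-- If all points of a class of `g` outside `Bad` have almost the same second coordinate, the
dyadic squares of level `n + a` carry little entropy given `g`. -/
lemma cH_le_of_flat (A Bad : Finset (ℝ × ℝ)) {θ u : ℝ} {Θ : ℕ} (hθ : |θ| ≤ Θ) {n j a : ℕ}
    (hj : n + a ≤ j) {g : Setoid (ℝ × ℝ)} (h1 : g ≤ P θ u j) (h2 : g ≤ D n)
    (hflat : ∀ b ∈ A, ∀ c ∈ A, b ∉ Bad → c ∉ Bad → g b c → 2 ^ (n + a) * |b.2 - c.2| ≤ 1)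
    (hBad : Bad ⊆ A) :
    cH A (D (n + a)) g ≤ A.card * Real.log (6 * (2 * Θ + 3)) + Bad.card * dlog a := by
  set f : Setoid (ℝ × ℝ) := Setoid.ker fun p => decide (p ∈ Bad) with hf
  have hfg : cH A f g ≤ A.card * Real.log 2 := by
    refine (cH_le A _ g (fun _ => 2) (fun _ _ => by positivity) (fun _ _ _ _ _ => rfl)
      fun a _ => ?_).trans_eq (by rw [Finset.sum_const, nsmul_eq_mul])
    have : ((cls A g a).image fun p => decide (p ∈ Bad)).card ≤ 2 :=
      (Finset.card_le_univ _).trans_eq (by simp)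
    exact_mod_cast this
  have hfrel : ∀ b c, f b c → (b ∈ Bad ↔ c ∈ Bad) := by
    intro b c hbc
    have : decide (b ∈ Bad) = decide (c ∈ Bad) := hbc
    simpa using this
  set K : ℝ × ℝ → ℝ := fun p => if p ∈ Bad then (2 * 2 ^ a + 1) * (2 * 2 ^ a + 1)
    else 3 * (2 * Θ + 3) with hK
  have hD : cH A (D (n + a)) (f ⊓ g) ≤ ∑ p ∈ A, Real.log (K p) := by
    refine cH_le A _ (f ⊓ g) K (fun p _ => ?_) (fun b _ c _ hbc => ?_) fun p hp => ?_
    · simp only [hK]; split_ifs <;> positivity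
    · simp only [hK, hfrel b c hbc.1]
    · by_cases hpB : p ∈ Bad
      · simp only [hK, hpB, if_true]
        exact card_D_D a fun b hb c hc =>
          h2 (g.trans (mem_cls.1 hb).2.2 (g.symm (mem_cls.1 hc).2.2))
      · simp only [hK, hpB, if_false]
        have hb' : ∀ b ∈ cls A (f ⊓ g) p, b ∉ Bad := fun b hb h =>
          hpB ((hfrel b p (mem_cls.1 hb).2.1).1 h)
        have hrel : ∀ b ∈ cls A (f ⊓ g) p, ∀ c ∈ cls A (f ⊓ g) p, g b c := fun b hb c hc =>
          g.trans (mem_cls.1 hb).2.2 (g.symm (mem_cls.1 hc).2.2)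
        have hy : ∀ b ∈ cls A (f ⊓ g) p, ∀ c ∈ cls A (f ⊓ g) p,
            2 ^ (n + a) * |b.2 - c.2| ≤ 1 := fun b hb c hc =>
          hflat b (mem_cls.1 hb).1 c (mem_cls.1 hc).1 (hb' b hb) (hb' c hc) (hrel b hb c hc)
        have := card_D_image_le (cls A (f ⊓ g) p) (n + a) (1 + Θ) 1
          (fun b hb c hc => by
            have e1 := P_abs (h1 (hrel b hb c hc))
            have e2 := hy b hb c hc
            have e3 : (2 : ℝ) ^ (n + a) ≤ 2 ^ j := pow_le_pow_right₀ (by norm_num) hj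
            have e : b.1 - c.1 = (xi θ b - xi θ c) - θ * (b.2 - c.2) := by unfold xi; ring
            have e4 : |b.1 - c.1| ≤ |xi θ b - xi θ c| + |θ| * |b.2 - c.2| := by
              rw [e, ← abs_mul]; exact abs_sub _ _
            have e5 : 2 ^ (n + a) * |xi θ b - xi θ c| ≤ 1 :=
              le_trans (by gcongr) e1.le
            have e6 := mul_le_mul hθ e2 (by positivity) (by positivity)
            have e7 := mul_le_mul_of_nonneg_left e4 (by positivity : (0 : ℝ) ≤ 2 ^ (n + a))
            push_cast
            linarith)
          (fun b hb c hc => by simpa using hy b hb c hc)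
        have h' : (((cls A (f ⊓ g) p).image
            fun p => (⌊2 ^ (n + a) * p.1⌋, ⌊2 ^ (n + a) * p.2⌋)).card : ℝ) ≤
            ((2 * (1 + Θ) + 1) * (2 * 1 + 1) : ℕ) := by exact_mod_cast this
        refine h'.trans (le_of_eq ?_)
        push_cast; ring
  have hsum : ∑ p ∈ A, Real.log (K p) ≤
      A.card * Real.log (3 * (2 * Θ + 3)) + Bad.card * dlog a := by
    have hl : 0 ≤ Real.log (3 * (2 * (Θ : ℝ) + 3)) :=
      Real.log_nonneg (by have : (0 : ℝ) ≤ Θ := by positivity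
                          linarith)
    have : ∀ p ∈ A, Real.log (K p) ≤ Real.log (3 * (2 * Θ + 3)) + if p ∈ Bad then dlog a else 0 := by
      intro p _
      by_cases hp : p ∈ Bad
      · simp only [hK, hp, if_true]
        exact le_add_of_nonneg_left hl
      · simp only [hK, hp, if_false, add_zero]; exact le_rfl
    refine (Finset.sum_le_sum this).trans_eq ?_
    rw [Finset.sum_add_distrib, Finset.sum_const, nsmul_eq_mul, Finset.sum_ite_mem,
      Finset.inter_eq_right.2 hBad, Finset.sum_const, nsmul_eq_mul]
  have hchain : cH A (D (n + a)) g ≤ cH A f g + cH A (D (n + a)) (f ⊓ g) := by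
    have : G A (D (n + a) ⊓ (f ⊓ g)) ≤ G A (D (n + a) ⊓ g) :=
      G_mono A (inf_le_inf_left _ inf_le_right)
    unfold cH
    linarith
  have hlog : Real.log (6 * (2 * (Θ : ℝ) + 3)) = Real.log 2 + Real.log (3 * (2 * Θ + 3)) := by
    rw [← Real.log_mul (by norm_num) (by positivity)]
    congr 1; ring
  rw [hlog, mul_add]
  linarith

/-- The local form of the theorem: two nearby slopes whose strips are both nearly independent of
the dyadic squares at the relevant scales leave only a bounded amount of entropy in the fibre. -/
lemma local_main (A : Finset (ℝ × ℝ)) {θ θ' u u' κ C s : ℝ} (hA : Hom C s θ A) {Θ : ℕ}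
    (hθ : |θ| ≤ Θ) (J a a' : ℕ) (hJ : C * (4 * J) ^ s < J / 2) (hκ : 0 < κ)
    (hκJ : 8 * κ * J ≤ 1 / 2) (ha' : 40 * (J : ℝ) * 2 ^ a ≤ 2 ^ a') {n j q m : ℕ}
    (hj : n + a ≤ j) (hq : j + q = n + m + a') (hδ : 1 < |θ' - θ| * 2 ^ (m + 1))
    {g : Setoid (ℝ × ℝ)} (h1 : g ≤ P θ u j) (h2 : g ≤ D n) :
    κ ^ 2 * (cH A (D (n + a)) g - A.card * Real.log (6 * (2 * Θ + 3))) ≤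
      (mI A (P θ u (j + q)) (D (n + a')) g + mI A (P θ' u' (j + q)) (D (n + a')) g) * dlog a := by
  set X := P θ u (j + q)
  set Z := P θ' u' (j + q)
  set Y := D (n + a')
  set B₁ := A.filter fun p => κ ^ 2 < dKL A X Y g p
  set B₂ := A.filter fun p => κ ^ 2 < dKL A Z Y g p
  have hδ0 : 0 < |θ' - θ| := by
    by_contra h
    have h0 : |θ' - θ| = 0 := le_antisymm (not_lt.1 h) (abs_nonneg _)
    rw [h0, zero_mul] at hδ
    linarith
  have hflat : ∀ b ∈ A, ∀ c ∈ A, b ∉ B₁ ∪ B₂ → c ∉ B₁ ∪ B₂ → g b c →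
      2 ^ (n + a) * |b.2 - c.2| ≤ 1 := by
    intro b hb c hc hbB hcB hbc
    by_contra hcon
    push Not at hcon
    simp only [Finset.mem_union, not_or, B₁, B₂, Finset.mem_filter, not_and, not_lt] at hbB hcB
    have hv : |θ' - θ| < 2 ^ (n + a) * |(θ' - θ) * (b.2 - c.2)| := by
      rw [abs_mul]
      nlinarith
    have hp : (0 : ℝ) < 2 ^ (n + a) := by positivity
    have hp' : (0 : ℝ) < 2 ^ (n + a') := by positivity
    refine no_two_good A (σ := (2 ^ (j + q))⁻¹) (σ' := |θ' - θ| * (2 ^ (n + a'))⁻¹) hA J hJ hκJ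
      (by positivity) (by positivity) (X := X) (Z := Z) (Y := Y) (h := g) (κ := κ) (θ' := θ')
      ?_ ?_ ?_ hκ.le hb hc hbc (hbB.1 hb) (hcB.1 hc) (hbB.2 hb) (hcB.2 hc) ?_ ?_
    · intro b c hbc
      rw [← one_div, le_div_iff₀' (by positivity)]
      exact (P_abs hbc).le
    · intro b c hbc
      rw [← one_div, le_div_iff₀' (by positivity)]
      exact (P_abs hbc).le
    · intro b c hbc
      rw [abs_mul]
      gcongr
      rw [← one_div, le_div_iff₀' hp']
      exact (D_snd hbc).le
    · by_contra h0
      have : |(θ' - θ) * (b.2 - c.2)| = 0 := le_antisymm (not_lt.1 h0) (abs_nonneg _)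
      rw [this, mul_zero] at hv
      linarith
    · have e1 : ((2 : ℝ) ^ (j + q))⁻¹ ≤ 2 * |θ' - θ| * (2 ^ (n + a'))⁻¹ := by
        rw [inv_le_iff_one_le_mul₀ (by positivity), hq]
        have : 2 * |θ' - θ| * ((2 : ℝ) ^ (n + a'))⁻¹ * 2 ^ (n + m + a') =
            |θ' - θ| * 2 ^ (m + 1) := by
          rw [pow_add, pow_add, pow_add, pow_add]; field_simp
        rw [this]
        exact hδ.le
      have e2 : (J : ℝ) * (4 * (2 ^ (j + q))⁻¹ + 2 * (|θ' - θ| * (2 ^ (n + a'))⁻¹)) ≤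
          J * (10 * (|θ' - θ| * (2 ^ (n + a'))⁻¹)) := by
        gcongr
        linarith
      refine e2.trans ?_
      have e3 : |θ' - θ| * (2 ^ (n + a))⁻¹ ≤ |(θ' - θ) * (b.2 - c.2)| := by
        rw [mul_inv_le_iff₀ hp, mul_comm]
        exact hv.le
      have e4 : 40 * (J : ℝ) * (2 ^ (n + a'))⁻¹ ≤ (2 ^ (n + a))⁻¹ := by
        rw [← div_eq_mul_inv, div_le_iff₀ hp', ← div_eq_inv_mul, le_div_iff₀ hp, pow_add, pow_add]
        have := mul_le_mul_of_nonneg_left ha' (by positivity : (0 : ℝ) ≤ 2 ^ n)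
        linarith
      have e5 := mul_le_mul_of_nonneg_left e4 hδ0.le
      linarith
  have hc := cH_le_of_flat A (B₁ ∪ B₂) hθ hj h1 h2 hflat
    (Finset.union_subset (Finset.filter_subset _ _) (Finset.filter_subset _ _))
  have hB : ((B₁ ∪ B₂).card : ℝ) ≤ B₁.card + B₂.card := by exact_mod_cast Finset.card_union_le _ _
  have k1 : κ ^ 2 * (B₁.card : ℝ) ≤ mI A X Y g := card_dKL_gt A X Y g
  have k2 : κ ^ 2 * (B₂.card : ℝ) ≤ mI A Z Y g := card_dKL_gt A Z Y g
  have hd := dlog_nonneg a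
  calc κ ^ 2 * (cH A (D (n + a)) g - A.card * Real.log (6 * (2 * Θ + 3)))
      ≤ κ ^ 2 * ((B₁.card + B₂.card) * dlog a) := by
        refine mul_le_mul_of_nonneg_left ?_ (by positivity)
        have := mul_le_mul_of_nonneg_right hB hd
        linarith
    _ = (κ ^ 2 * B₁.card + κ ^ 2 * B₂.card) * dlog a := by ring
    _ ≤ _ := mul_le_mul_of_nonneg_right (add_le_add k1 k2) hd

end Local

end AssouadProj

namespace AssouadProj

/-! ### Information shared by strips and squares across scales -/

section Scales

open scoped Classical

lemma mI_P (A : Finset (ℝ × ℝ)) (θ u : ℝ) {k k' : ℕ} (i : ℕ) (hk : k ≤ k') :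
    mI A (P θ u k') (D i) (P θ u k) =
      (G A (P θ u k) - G A (P θ u k ⊓ D i)) - (G A (P θ u k') - G A (P θ u k' ⊓ D i)) := by
  have h := P_anti θ u hk
  have e1 : P θ u k' ⊓ D i ⊓ P θ u k = P θ u k' ⊓ D i := inf_eq_left.2 (inf_le_left.trans h)
  rw [mI, e1, inf_eq_left.2 h, inf_comm (D i)]
  ring

/-- The information on the strip of level `k + 1` given by the square of level `k - l`, when the
strip of level `k` is known. -/
def psi (A : Finset (ℝ × ℝ)) (θ u : ℝ) (l k : ℕ) : ℝ :=
  mI A (P θ u (k + 1)) (D (k - l)) (P θ u k)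

lemma psi_nonneg (A : Finset (ℝ × ℝ)) (θ u : ℝ) (l k : ℕ) : 0 ≤ psi A θ u l k :=
  mI_nonneg _ _ _ _

lemma mI_eq_sum (A : Finset (ℝ × ℝ)) (θ u : ℝ) (j q i : ℕ) :
    mI A (P θ u (j + q)) (D i) (P θ u j) =
      ∑ r ∈ Finset.range q, mI A (P θ u (j + r + 1)) (D i) (P θ u (j + r)) := by
  induction q with
  | zero => rw [add_zero, mI_P A θ u i le_rfl]; simp
  | succ q ih =>
    rw [Finset.sum_range_succ, ← ih, mI_P A θ u i (Nat.le_add_right j q),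
      mI_P A θ u i (Nat.le_add_right (j + q) 1), mI_P A θ u i (Nat.le_add_right j (q + 1)),
      ← add_assoc]
    ring

lemma mI_le_sum_psi (A : Finset (ℝ × ℝ)) (θ u : ℝ) (l j q : ℕ) :
    mI A (P θ u (j + q)) (D (j - l)) (P θ u j) ≤
      ∑ r ∈ Finset.range q, psi A θ u l (j + r) := by
  rw [mI_eq_sum]
  exact Finset.sum_le_sum fun r _ => mI_mono A (D_anti (by omega))

lemma sum_psi_le (A : Finset (ℝ × ℝ)) (θ u : ℝ) (l b : ℕ) :
    ∑ r ∈ Finset.range l, psi A θ u l (b + r) ≤ mI A (P θ u (b + l)) (D b) (P θ u b) := by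
  rw [mI_eq_sum]
  exact Finset.sum_le_sum fun r hr => mI_mono A (D_anti (by
    have := Finset.mem_range.1 hr
    omega))

lemma cH_mono (A : Finset (ℝ × ℝ)) {f f' g : Setoid (ℝ × ℝ)} (h : f ≤ f') :
    cH A f' g ≤ cH A f g := by
  have := G_mono A (inf_le_inf_right g h)
  unfold cH
  linarith

/-- A different offset changes the entropy of the strips by a bounded amount. -/
lemma G_P_offset (A : Finset (ℝ × ℝ)) (θ u : ℝ) (N : ℕ) :
    G A (P θ 0 N) ≤ G A (P θ u N) + A.card * Real.log 5 := by
  have h1 := G_le_add_cH A (P θ u N) (P θ 0 N)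
  have h2 := cH_floor A (fun p => 2 ^ N * (xi θ p + u)) (P θ 0 N) 2 fun a _ b _ hab => by
    have := P_abs hab
    have e : 2 ^ N * (xi θ a + u) - 2 ^ N * (xi θ b + u) = 2 ^ N * (xi θ a - xi θ b) := by ring
    rw [e, abs_mul, abs_of_pos (by positivity : (0 : ℝ) < 2 ^ N)]
    push_cast
    linarith
  rw [show 2 * ((2 : ℕ) : ℝ) + 1 = 5 by norm_num] at h2
  unfold P at *
  linarith

lemma G_D_le (A : Finset (ℝ × ℝ)) {n n' w : ℕ} (h : n' ≤ n + w) :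
    G A (D n) ≤ G A (D n') + A.card * dlog w := by
  have h1 := G_le_add_cH A (D n') (D n)
  have h2 : cH A (D n') (D n) ≤ cH A (D (n + w)) (D n) := cH_mono A (D_anti h)
  have h3 := cH_D_D A n w
  linarith

/-- The total entropy of the squares inside the strips of level `N`, seen through windows of
length `a`. -/
lemma fibre_entropy (A : Finset (ℝ × ℝ)) (θ u : ℝ) (n₀ a L' w N : ℕ) (hN : N ≤ n₀ + L' + w)
    (hconst : ∀ p ∈ A, ∀ q ∈ A, D n₀ p q) :
    a * (G A (P θ u N) - G A (D N) - A.card * (dlog a + dlog w)) ≤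
      ∑ i ∈ Finset.range L', cH A (D (n₀ + i + a)) (D (n₀ + i) ⊓ P θ u N) := by
  set g : ℕ → ℝ := fun i => G A (D (n₀ + i) ⊓ P θ u N) with hg
  have e : ∀ i, cH A (D (n₀ + i + a)) (D (n₀ + i) ⊓ P θ u N) = g i - g (i + a) := by
    intro i
    rw [cH, ← inf_assoc, inf_eq_left.2 (D_anti (Nat.le_add_right (n₀ + i) a)), hg]
    simp only [add_assoc]
  have ganti : Antitone g := fun i k hik => G_mono A (inf_le_inf_right _ (D_anti (by omega)))
  have tel : ∑ i ∈ Finset.range L', (g i - g (i + a)) =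
      ∑ i ∈ Finset.range a, (g i - g (L' + i)) := by
    rw [Finset.sum_sub_distrib, Finset.sum_sub_distrib]
    have h1 := Finset.sum_range_add g L' a
    have h2 := Finset.sum_range_add g a L'
    rw [add_comm a L'] at h2
    simp only [add_comm a] at h2
    linarith
  rw [Finset.sum_congr rfl fun i _ => e i, tel]
  have hlow : ∀ i ∈ Finset.range a, G A (P θ u N) - G A (D N) - A.card * (dlog a + dlog w) ≤
      g i - g (L' + i) := by
    intro i hi
    have h1 : g a ≤ g i := ganti (Finset.mem_range.1 hi).le
    have h2 : g (L' + i) ≤ g L' := ganti (Nat.le_add_right _ _)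
    have h3 : g L' ≤ G A (D (n₀ + L')) := G_mono A inf_le_left
    have h4 : G A (D (n₀ + L')) ≤ G A (D N) + A.card * dlog w := G_D_le A hN
    have h5 : G A (D n₀ ⊓ P θ u N) = G A (P θ u N) := G_inf_of_const hconst
    have h6 : g 0 - g (0 + a) ≤ A.card * dlog a := by
      rw [← e 0]
      exact (cH_anti A inf_le_left).trans (cH_D_D A _ a)
    have h7 : g 0 = G A (P θ u N) := h5
    rw [zero_add] at h6
    linarith
  have := Finset.sum_le_sum hlow
  rwa [Finset.sum_const, Finset.card_range, nsmul_eq_mul] at this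

/-- Points whose projection is close to an endpoint of a strip of level `j`. -/
def near (A : Finset (ℝ × ℝ)) (θ u : ℝ) (B j : ℕ) : Finset (ℝ × ℝ) :=
  A.filter fun p => ∃ N : ℤ, |2 ^ j * (xi θ p + u) - N| ≤ 2 / 2 ^ B

lemma cH_near (A : Finset (ℝ × ℝ)) (θ u : ℝ) (B j : ℕ) (g : Setoid (ℝ × ℝ))
    (h : ∀ b ∈ A, ∀ c ∈ A, g b c → 2 ^ j * |xi θ b - xi θ c| ≤ 2 / 2 ^ B) :
    cH A (P θ u j) g ≤ Real.log 5 * (near A θ u B j).card := by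
  set t : ℝ × ℝ → ℝ := fun p => 2 ^ j * (xi θ p + u) with ht
  have ht' : ∀ b ∈ A, ∀ c ∈ A, g b c → |t b - t c| ≤ 2 / 2 ^ B := by
    intro b hb c hc hbc
    have e : t b - t c = 2 ^ j * (xi θ b - xi θ c) := by simp only [ht]; ring
    rw [e, abs_mul, abs_of_pos (by positivity : (0 : ℝ) < 2 ^ j)]
    exact h b hb c hc hbc
  set K : ℝ × ℝ → ℝ := fun p => if ∀ c ∈ cls A g p, c ∈ near A θ u B j then 5 else 1 with hK
  have h1 : cH A (P θ u j) g ≤ ∑ p ∈ A, Real.log (K p) := by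
    refine cH_le A _ g K (fun p _ => ?_) (fun b _ c _ hbc => ?_) fun p hp => ?_
    · simp only [hK]; split_ifs <;> norm_num
    · simp only [hK, cls_eq hbc]
    · have hrel : ∀ b ∈ cls A g p, ∀ c ∈ cls A g p, |t b - t c| ≤ 2 / 2 ^ B := fun b hb c hc =>
        ht' b (mem_cls.1 hb).1 c (mem_cls.1 hc).1
          (g.trans (mem_cls.1 hb).2 (g.symm (mem_cls.1 hc).2))
      have hB : (2 : ℝ) / 2 ^ B ≤ 2 := div_le_self (by norm_num) (one_le_pow₀ (by norm_num))
      by_cases hall : ∀ c ∈ cls A g p, c ∈ near A θ u B j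
      · simp only [hK]
        rw [if_pos hall]
        have h5 := card_floor_le (cls A g p) t 2 fun b hb c hc =>
          (hrel b hb c hc).trans (by exact_mod_cast hB)
        exact (Nat.cast_le (α := ℝ).2 h5).trans_eq (by norm_num)
      · simp only [hK]
        rw [if_neg hall]
        have : ((cls A g p).image fun p => ⌊t p⌋).card ≤ 1 := by
          rw [Finset.card_le_one]
          by_contra hne
          push Not at hne
          obtain ⟨x, hx, y, hy, hxy⟩ := hne
          obtain ⟨b, hb, rfl⟩ := Finset.mem_image.1 hx
          obtain ⟨d, hd, rfl⟩ := Finset.mem_image.1 hy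
          -- an integer separates two values, so every point of the class is close to it
          have main : ∀ b ∈ cls A g p, ∀ d ∈ cls A g p, ⌊t b⌋ < ⌊t d⌋ → False := by
            intro b hb d hd hlt
            refine hall fun c hc => Finset.mem_filter.2 ⟨(mem_cls.1 hc).1, ⌊t d⌋, ?_⟩
            have e1 := abs_le.1 (hrel b hb c hc)
            have e2 := abs_le.1 (hrel d hd c hc)
            have e3 := Int.floor_le (t d)
            have e4 := Int.floor_lt.1 hlt
            change |t c - _| ≤ _
            rw [abs_le]
            constructor <;> linarith [e1.1, e1.2, e2.1, e2.2]
          rcases lt_or_gt_of_ne hxy with h | h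
          · exact main b hb d hd h
          · exact main d hd b hb h
        exact (Nat.cast_le (α := ℝ).2 this).trans_eq (by norm_num)
  refine h1.trans ?_
  have h2 : ∀ p ∈ A, Real.log (K p) ≤ if p ∈ near A θ u B j then Real.log 5 else 0 := by
    intro p hp
    have l5 : 0 ≤ Real.log 5 := Real.log_nonneg (by norm_num)
    by_cases hall : ∀ c ∈ cls A g p, c ∈ near A θ u B j
    · rw [if_pos (hall p (self_mem_cls hp))]
      simp only [hK]
      rw [if_pos hall]
    · simp only [hK]
      rw [if_neg hall, Real.log_one]
      split_ifs <;> simp [l5]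
  refine (Finset.sum_le_sum h2).trans_eq ?_
  rw [Finset.sum_ite_mem,
    Finset.inter_eq_right.2 (show near A θ u B j ⊆ A from Finset.filter_subset _ _),
    Finset.sum_const, nsmul_eq_mul, mul_comm]

/-- A point is near an endpoint for few of the offsets `i / (2 ^ B + 1)`, because `2 ^ j` is
invertible modulo `2 ^ B + 1`. -/
lemma card_offsets (x : ℝ) {B : ℕ} (hB : 1 ≤ B) (j : ℕ) :
    ((Finset.range (2 ^ B + 1)).filter fun i : ℕ => ∃ N : ℤ,
      |2 ^ j * (x + (i : ℝ) / (2 ^ B + 1)) - N| ≤ 2 / 2 ^ B).card ≤ 9 := by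
  set M : ℝ := 2 ^ B + 1 with hM
  have hMpos : 0 < M := by positivity
  set S := (Finset.range (2 ^ B + 1)).filter fun i : ℕ => ∃ N : ℤ,
      |2 ^ j * (x + (i : ℝ) / M) - N| ≤ 2 / 2 ^ B with hS
  have hex : ∀ i : ℕ, ∃ N : ℤ, i ∈ S → |2 ^ j * (x + (i : ℝ) / M) - N| ≤ 2 / 2 ^ B := by
    intro i
    by_cases hi : i ∈ S
    · obtain ⟨N, hN⟩ := (Finset.mem_filter.1 hi).2
      exact ⟨N, fun _ => hN⟩
    · exact ⟨0, fun h => absurd h hi⟩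
  choose N hN using hex
  set e : ℕ → ℤ := fun i => 2 ^ j * i - (2 ^ B + 1) * N i with he
  set t : ℝ := M * (2 ^ j * x) with ht
  have hcop : IsCoprime ((2 : ℤ) ^ B + 1) (2 ^ j) := by
    refine IsCoprime.pow_right ?_
    obtain ⟨b, rfl⟩ := Nat.exists_eq_add_of_le hB
    exact ⟨1, -2 ^ b, by ring⟩
  have hinj : Set.InjOn e S := by
    intro i hi k hk hik
    have hi' := Finset.mem_range.1 (Finset.mem_filter.1 hi).1
    have hk' := Finset.mem_range.1 (Finset.mem_filter.1 hk).1
    have h1 : ((2 : ℤ) ^ B + 1) ∣ 2 ^ j * ((i : ℤ) - k) := by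
      refine ⟨N i - N k, ?_⟩
      simp only [he] at hik
      linarith
    have h2 := hcop.dvd_of_dvd_mul_left h1
    have h3 : |(i : ℤ) - k| < 2 ^ B + 1 := by
      have hi2 : (i : ℤ) < 2 ^ B + 1 := by exact_mod_cast hi'
      have hk2 : (k : ℤ) < 2 ^ B + 1 := by exact_mod_cast hk'
      rw [abs_lt]
      constructor <;> omega
    have h4 := Int.eq_zero_of_abs_lt_dvd h2 h3
    omega
  have hsub : S.image e ⊆ Finset.Icc ⌈-t - 4⌉ ⌊-t + 4⌋ := by
    intro k hk
    obtain ⟨i, hi, rfl⟩ := Finset.mem_image.1 hk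
    have h1 := hN i hi
    have h2 : t + e i = M * (2 ^ j * (x + (i : ℝ) / M) - N i) := by
      simp only [he, ht]
      push_cast
      rw [← hM]
      field_simp
      ring
    have h3 : |t + e i| ≤ 4 := by
      rw [h2, abs_mul, abs_of_pos hMpos]
      refine (mul_le_mul_of_nonneg_left h1 hMpos.le).trans ?_
      rw [hM, mul_div_assoc', div_le_iff₀ (by positivity)]
      have : (1 : ℝ) ≤ 2 ^ B := one_le_pow₀ (by norm_num)
      linarith
    have h4 := abs_le.1 h3
    rw [Finset.mem_Icc, Int.ceil_le, Int.le_floor]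
    constructor <;> linarith [h4.1, h4.2]
  rw [← Finset.card_image_of_injOn hinj]
  refine (Finset.card_le_card hsub).trans ?_
  rw [Int.card_Icc]
  have h1 := Int.floor_le (-t + 4)
  have h2 := Int.le_ceil (-t - 4)
  have h3 : ((⌊-t + 4⌋ - ⌈-t - 4⌉ : ℤ) : ℝ) ≤ ((8 : ℤ) : ℝ) := by push_cast; linarith
  have h4 : ⌊-t + 4⌋ - ⌈-t - 4⌉ ≤ 8 := by exact_mod_cast h3
  omega

lemma sum_near_le (A : Finset (ℝ × ℝ)) (θ : ℝ) {B : ℕ} (hB : 1 ≤ B) (j : ℕ) :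
    ∑ i ∈ Finset.range (2 ^ B + 1), ((near A θ ((i : ℝ) / (2 ^ B + 1)) B j).card : ℝ) ≤
      9 * A.card := by
  have h1 : ∀ i ∈ Finset.range (2 ^ B + 1), ((near A θ ((i : ℝ) / (2 ^ B + 1)) B j).card : ℝ) =
      ∑ p ∈ A, if ∃ N : ℤ, |2 ^ j * (xi θ p + (i : ℝ) / (2 ^ B + 1)) - N| ≤ 2 / 2 ^ B
        then (1 : ℝ) else 0 := by
    intro i _
    rw [near, Finset.card_filter, Nat.cast_sum]
    exact Finset.sum_congr rfl fun p _ => by split_ifs <;> simp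
  rw [Finset.sum_congr rfl h1, Finset.sum_comm]
  refine (Finset.sum_le_sum (g := fun _ => (9 : ℝ)) fun p _ => ?_).trans_eq (by
    rw [Finset.sum_const, nsmul_eq_mul, mul_comm])
  rw [Finset.sum_boole]
  exact_mod_cast card_offsets (xi θ p) hB j

lemma exists_offset (A : Finset (ℝ × ℝ)) (θ : ℝ) {B : ℕ} (hB : 1 ≤ B) (n₀ L : ℕ) :
    ∃ u : ℝ, (2 ^ B : ℝ) * ∑ r ∈ Finset.range L, ((near A θ u B (n₀ + r)).card : ℝ) ≤
      9 * L * A.card := by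
  by_contra hcon
  push Not at hcon
  have h1 : ∑ i ∈ Finset.range (2 ^ B + 1), ∑ r ∈ Finset.range L,
      ((near A θ ((i : ℝ) / (2 ^ B + 1)) B (n₀ + r)).card : ℝ) ≤ 9 * L * A.card := by
    rw [Finset.sum_comm]
    refine (Finset.sum_le_sum fun r _ => sum_near_le A θ hB (n₀ + r)).trans_eq ?_
    rw [Finset.sum_const, Finset.card_range, nsmul_eq_mul]
    ring
  have h2 : ∑ i ∈ Finset.range (2 ^ B + 1), (9 * L * A.card : ℝ) ≤
      ∑ i ∈ Finset.range (2 ^ B + 1), (2 ^ B : ℝ) * ∑ r ∈ Finset.range L,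
        ((near A θ ((i : ℝ) / (2 ^ B + 1)) B (n₀ + r)).card : ℝ) :=
    Finset.sum_le_sum fun i _ => (hcon _).le
  rw [Finset.sum_const, Finset.card_range, nsmul_eq_mul, ← Finset.mul_sum] at h2
  have h3 := mul_le_mul_of_nonneg_left h1 (by positivity : (0 : ℝ) ≤ 2 ^ B)
  have h4 : (9 * L * A.card : ℝ) ≤ 0 := by
    push_cast at h2
    linarith
  have h5 := hcon 0
  have h6 : ∑ r ∈ Finset.range L, ((near A θ 0 B (n₀ + r)).card : ℝ) ≤ L * A.card := by
    refine (Finset.sum_le_sum (g := fun _ => (A.card : ℝ)) fun r _ => ?_).trans_eq (by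
      rw [Finset.sum_const, Finset.card_range, nsmul_eq_mul])
    exact_mod_cast Finset.card_le_card (Finset.filter_subset _ _)
  have h7 : (0 : ℝ) ≤ 9 * L * A.card := by positivity
  have h8 : (L * A.card : ℝ) = 0 := by linarith
  have h9 := mul_le_mul_of_nonneg_left h6 (by positivity : (0 : ℝ) ≤ 2 ^ B)
  rw [h8, mul_zero] at h9
  linarith

end Scales

end AssouadProj

namespace AssouadProj

/-! ### The multi-scale argument -/

section Core

open scoped Classical

/-- The non-empty finite sets whose projections with slopes in `E` satisfy a common dimension
bound. -/
def Adm (C s : ℝ) (E : Set ℝ) (A : Finset (ℝ × ℝ)) : Prop :=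
  A.Nonempty ∧ ∀ θ ∈ E, Hom C s θ A

/-- For every finite family of slopes in `E` there are admissible sets inside one dyadic square,
spread over arbitrarily many scales, for which the mean over the family of the fibre entropy of
the projection is at least `v` per scale. -/
def Good (C s : ℝ) (E : Set ℝ) (v : ℝ) : Prop :=
  ∀ (ι : Type) [Fintype ι] [Nonempty ι] (w : ι → ℝ), (∀ i, w i ∈ E) → ∀ L₀ : ℕ,
    ∃ L ≥ L₀, ∃ (n : ℕ) (A : Finset (ℝ × ℝ)), Adm C s E A ∧ (∀ p ∈ A, ∀ q ∈ A, D n p q) ∧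
      v * L * A.card * Fintype.card ι ≤ ∑ i, (G A (P (w i) 0 (n + L)) - G A (D (n + L)))

/-- If `v` is not attained on windows of length `l` for the slopes `w`, the same upper bound holds
conditionally on the square at the start of the window, and for nearby slopes `w₂`. -/
lemma block_bound {C s : ℝ} {E : Set ℝ} {ι : Type} [Fintype ι] {w w₂ u : ι → ℝ} {v : ℝ} {l : ℕ}
    (hbad : ∀ (n : ℕ) (A : Finset (ℝ × ℝ)), Adm C s E A → (∀ p ∈ A, ∀ q ∈ A, D n p q) →
      ∑ i, (G A (P (w i) 0 (n + l)) - G A (D (n + l))) ≤ v * l * A.card * Fintype.card ι)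
    (hw : ∀ i, |w i - w₂ i| * 2 ^ l ≤ 1) {A : Finset (ℝ × ℝ)} (hA : ∀ θ ∈ E, Hom C s θ A) (n : ℕ) :
    ∑ i, (G A (D n ⊓ P (w₂ i) (u i) (n + l)) - G A (D (n + l))) ≤
      (v * l + Real.log 5) * A.card * Fintype.card ι := by
  have h1 : ∀ i, G A (D n ⊓ P (w₂ i) (u i) (n + l)) ≤
      G A (D n ⊓ P (w i) 0 (n + l)) + A.card * Real.log 5 := by
    intro i
    have h2 := cH_P_P A (u i) 0 n l (hw i) (g := D n ⊓ P (w₂ i) (u i) (n + l))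
      inf_le_right inf_le_left
    have h3 : G A (P (w i) 0 (n + l) ⊓ (D n ⊓ P (w₂ i) (u i) (n + l))) ≤
        G A (D n ⊓ P (w i) 0 (n + l)) :=
      G_mono A (le_inf (inf_le_right.trans inf_le_left) inf_le_left)
    unfold cH at h2
    linarith
  have h4 : ∑ i, (G A (D n ⊓ P (w i) 0 (n + l)) - G A (D (n + l))) ≤
      v * l * A.card * Fintype.card ι := by
    have e : D (n + l) = D n ⊓ D (n + l) := (inf_eq_right.2 (D_anti (Nat.le_add_right n l))).symm
    have h5 : ∀ i, G A (D n ⊓ P (w i) 0 (n + l)) - G A (D (n + l)) =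
        ∑ a ∈ A, ((cls A (D n) a).card : ℝ)⁻¹ *
          (G (cls A (D n) a) (P (w i) 0 (n + l)) - G (cls A (D n) a) (D (n + l))) := by
      intro i
      rw [e, G_inf_eq, G_inf_eq, ← e, ← Finset.sum_sub_distrib]
      exact Finset.sum_congr rfl fun a _ => (mul_sub _ _ _).symm
    rw [Finset.sum_congr rfl fun i _ => h5 i, Finset.sum_comm]
    have h6 : ∀ a ∈ A, ∑ i, ((cls A (D n) a).card : ℝ)⁻¹ *
        (G (cls A (D n) a) (P (w i) 0 (n + l)) - G (cls A (D n) a) (D (n + l))) ≤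
        v * l * Fintype.card ι := by
      intro a ha
      rw [← Finset.mul_sum, inv_mul_le_iff₀ (cls_pos ha)]
      refine (hbad n (cls A (D n) a) ⟨⟨a, self_mem_cls ha⟩, fun θ hθ =>
        (hA θ hθ).mono (cls_subset _ _ _)⟩ fun p hp q hq =>
        (D n).trans (mem_cls.1 hp).2 ((D n).symm (mem_cls.1 hq).2)).trans_eq (by ring)
    refine (Finset.sum_le_sum h6).trans_eq ?_
    rw [Finset.sum_const, nsmul_eq_mul]
    ring
  have h7 : ∑ i, (G A (D n ⊓ P (w₂ i) (u i) (n + l)) - G A (D (n + l))) ≤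
      ∑ i, ((G A (D n ⊓ P (w i) 0 (n + l)) - G A (D (n + l))) + A.card * Real.log 5) :=
    Finset.sum_le_sum fun i _ => by linarith [h1 i]
  rw [Finset.sum_add_distrib, Finset.sum_const, nsmul_eq_mul, Finset.card_univ] at h7
  linarith

/-- Near-maximality of the fibre entropy forces strips and squares to share little information. -/
lemma psi_total {κ : Type} [Fintype κ] {W u : κ → ℝ} {Θ : ℕ} (hΘ : ∀ i, |W i| ≤ Θ)
    {A : Finset (ℝ × ℝ)} {l M L n₀ : ℕ} {c v : ℝ}
    (hblock : ∀ n, ∑ i, (G A (D n ⊓ P (W i) (u i) (n + l)) - G A (D (n + l))) ≤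
      c * A.card * Fintype.card κ)
    (hconst : ∀ p ∈ A, ∀ q ∈ A, D n₀ p q)
    (hgood : v * L * A.card * Fintype.card κ ≤
      ∑ i, (G A (P (W i) 0 (n₀ + L)) - G A (D (n₀ + L))))
    (hM : M * l ≤ L) (hM' : L ≤ M * l + l) :
    ∑ i, ∑ r ∈ Finset.range (M * l), psi A (W i) (u i) l (n₀ + r) ≤
      Fintype.card κ * A.card *
        (M * (c + Real.log (2 * Θ + 3)) - v * L + Real.log 5 + dlog l) := by
  -- the contribution of one slope
  have h1 : ∀ (M : ℕ) (i : κ), ∑ r ∈ Finset.range (M * l), psi A (W i) (u i) l (n₀ + r) ≤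
      (G A (P (W i) (u i) n₀) - G A (P (W i) (u i) (n₀ + M * l))) +
      ∑ b ∈ Finset.range M, ((G A (D (n₀ + b * l) ⊓ P (W i) (u i) (n₀ + b * l + l)) -
        G A (D (n₀ + b * l + l))) + A.card * Real.log (2 * Θ + 3)) +
        (G A (D (n₀ + M * l)) - G A (D n₀)) := by
    intro M i
    clear hM hM'
    induction M with
    | zero => simp
    | succ M ih =>
      have e : (M + 1) * l = M * l + l := by ring
      have h2 := sum_psi_le A (W i) (u i) l (n₀ + M * l)
      rw [mI_P A (W i) (u i) _ (Nat.le_add_right _ l)] at h2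
      have h3 := cH_P_D A (u i) (n₀ + M * l) (hΘ i)
      rw [cH] at h3
      rw [e, Finset.sum_range_add, Finset.sum_range_succ]
      simp only [← add_assoc]
      rw [inf_comm (P (W i) (u i) (n₀ + M * l + l))] at h2
      linarith
  have h2 := Finset.sum_le_sum fun i (_ : i ∈ Finset.univ) => h1 M i
  have h3 : ∑ i, ∑ b ∈ Finset.range M,
      ((G A (D (n₀ + b * l) ⊓ P (W i) (u i) (n₀ + b * l + l)) -
        G A (D (n₀ + b * l + l))) + A.card * Real.log (2 * Θ + 3)) ≤
      M * (c * A.card * Fintype.card κ + Fintype.card κ * (A.card * Real.log (2 * Θ + 3))) := by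
    rw [Finset.sum_comm]
    have : ∀ b ∈ Finset.range M, ∑ i, ((G A (D (n₀ + b * l) ⊓ P (W i) (u i) (n₀ + b * l + l)) -
        G A (D (n₀ + b * l + l))) + A.card * Real.log (2 * Θ + 3)) ≤
        c * A.card * Fintype.card κ + Fintype.card κ * (A.card * Real.log (2 * Θ + 3)) := by
      intro b _
      rw [Finset.sum_add_distrib, Finset.sum_const, nsmul_eq_mul, Finset.card_univ]
      linarith [hblock (n₀ + b * l)]
    refine (Finset.sum_le_sum this).trans_eq ?_
    rw [Finset.sum_const, nsmul_eq_mul, Finset.card_range]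
  have h4 : ∀ i, (G A (P (W i) (u i) n₀) - G A (P (W i) (u i) (n₀ + M * l))) +
      (G A (D (n₀ + M * l)) - G A (D n₀)) ≤
      A.card * (Real.log 5 + dlog l) - (G A (P (W i) 0 (n₀ + L)) - G A (D (n₀ + L))) := by
    intro i
    have h5 : G A (D n₀) = G A ⊤ := by
      have := G_inf_of_const (s := ⊤) hconst
      rwa [inf_top_eq] at this
    have h6 := G_mono A (le_top : P (W i) (u i) n₀ ≤ ⊤)
    have h7 := G_D_le A (n := n₀ + M * l) (n' := n₀ + L) (w := l) (by omega)
    have h8 := G_P_offset A (W i) (u i) (n₀ + L)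
    have h9 := G_mono A (P_anti (W i) (u i) (show n₀ + M * l ≤ n₀ + L by omega))
    linarith
  have h5 := Finset.sum_le_sum fun i (_ : i ∈ Finset.univ) => h4 i
  rw [Finset.sum_sub_distrib, Finset.sum_add_distrib] at h5
  rw [Finset.sum_const (A.card * (Real.log 5 + dlog l)), nsmul_eq_mul, Finset.card_univ] at h5
  rw [Finset.sum_add_distrib, Finset.sum_add_distrib] at h2
  linarith

end Core

end AssouadProj

/-! ### Pairs of nearby slopes -/

namespace AssouadProj

section Core2

open scoped Classical

lemma cH_near_of_P (A : Finset (ℝ × ℝ)) (θ θ' u u' : ℝ) {B j q n m : ℕ} (hj : j + B = n + m)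
    (hq : B ≤ q) (hδ : |θ' - θ| * 2 ^ m ≤ 1) :
    cH A (P θ' u' j) (P θ u (j + q) ⊓ D n) ≤ Real.log 5 * (near A θ' u' B j).card := by
  refine cH_near A θ' u' B j _ fun b _ c _ hbc => ?_
  have h1 := P_abs hbc.1
  have h2 := D_snd hbc.2
  have hB : (0 : ℝ) < 2 ^ B := by positivity
  rw [le_div_iff₀ hB]
  have e : xi θ' b - xi θ' c = (xi θ b - xi θ c) + (θ' - θ) * (b.2 - c.2) := by
    simp only [xi]; ring
  have h3 : |xi θ' b - xi θ' c| ≤ |xi θ b - xi θ c| + |θ' - θ| * |b.2 - c.2| := by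
    rw [e, ← abs_mul]; exact abs_add_le _ _
  have h4 : (2 : ℝ) ^ j * 2 ^ B * |xi θ b - xi θ c| ≤ 1 := by
    refine le_trans (mul_le_mul_of_nonneg_right ?_ (abs_nonneg _)) h1.le
    rw [← pow_add]
    exact pow_le_pow_right₀ (by norm_num) (by omega)
  have h5 : (2 : ℝ) ^ j * 2 ^ B * (|θ' - θ| * |b.2 - c.2|) ≤ 1 := by
    rw [← pow_add, hj, pow_add]
    calc (2 : ℝ) ^ n * 2 ^ m * (|θ' - θ| * |b.2 - c.2|)
        = (|θ' - θ| * 2 ^ m) * (2 ^ n * |b.2 - c.2|) := by ring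
      _ ≤ 1 * 1 := mul_le_mul hδ h2.le (by positivity) zero_le_one
      _ = 1 := one_mul 1
  have h6 : (0 : ℝ) < 2 ^ j * 2 ^ B := by positivity
  nlinarith [mul_le_mul_of_nonneg_left h3 h6.le]

/-- Two slopes at distance about `2 ^ (-m)`: the entropy of the squares of level `n + a` inside a
strip is controlled by the information that squares carry on the two families of strips, at
scales of level about `n + m`. -/
lemma pair_step (A : Finset (ℝ × ℝ)) {θ θ' u u' κ C s : ℝ} (hA : Hom C s θ A) {Θ : ℕ}
    (hθ : |θ| ≤ Θ) (J a a' : ℕ) (hJ : C * (4 * J) ^ s < J / 2) (hκ : 0 < κ)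
    (hκJ : 8 * κ * J ≤ 1 / 2) (ha' : 40 * (J : ℝ) * 2 ^ a ≤ 2 ^ a') {n j m B l N : ℕ}
    (hj : j + B = n + m) (hl : l + a' + B ≤ m) (ha : a + B ≤ m) (hN : j ≤ N)
    (hδ : |θ' - θ| * 2 ^ m ≤ 1) (hδ' : 1 < |θ' - θ| * 2 ^ (m + 1)) :
    κ ^ 2 * (cH A (D (n + a)) (D n ⊓ P θ u N) -
        A.card * (Real.log 5 + Real.log (6 * (2 * Θ + 3)))) ≤
      dlog a * (∑ r ∈ Finset.range (B + a'), psi A θ u l (j + r) +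
        ∑ r ∈ Finset.range (B + a'), psi A θ' u' l (j + r) +
        Real.log 5 * ((near A θ' u' B j).card + (near A θ u B j).card)) := by
  have h0 := local_main A (u := u) (u' := u') hA hθ J a a' hJ hκ hκJ ha' (n := n) (j := j)
    (q := B + a') (m := m) (by omega) (by omega) hδ' (g := P θ u j ⊓ P θ' u' j ⊓ D n)
    (inf_le_left.trans inf_le_left) inf_le_right
  have hδ2 : |θ - θ'| * 2 ^ m ≤ 1 := by rwa [abs_sub_comm]
  have h1 : mI A (P θ u (j + (B + a'))) (D (n + a')) (P θ u j ⊓ P θ' u' j ⊓ D n) ≤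
      ∑ r ∈ Finset.range (B + a'), psi A θ u l (j + r) +
        Real.log 5 * (near A θ' u' B j).card := by
    have := mI_context A (X := P θ u (j + (B + a'))) (x := P θ u j) (Y := D (n + a')) (K := D n)
      (W := D (j - l)) (z := P θ' u' j) (P_anti θ u (Nat.le_add_right _ _))
      (D_anti (Nat.le_add_right _ _)) (D_anti (by omega))
    have h2 := mI_le_sum_psi A θ u l j (B + a')
    have h3 := cH_near_of_P A θ θ' u u' (q := B + a') hj (Nat.le_add_right _ _) hδ
    linarith
  have h2 : mI A (P θ' u' (j + (B + a'))) (D (n + a')) (P θ u j ⊓ P θ' u' j ⊓ D n) ≤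
      ∑ r ∈ Finset.range (B + a'), psi A θ' u' l (j + r) +
        Real.log 5 * (near A θ u B j).card := by
    have := mI_context A (X := P θ' u' (j + (B + a'))) (x := P θ' u' j) (Y := D (n + a'))
      (K := D n) (W := D (j - l)) (z := P θ u j) (P_anti θ' u' (Nat.le_add_right _ _))
      (D_anti (Nat.le_add_right _ _)) (D_anti (by omega))
    have h2 := mI_le_sum_psi A θ' u' l j (B + a')
    have h3 := cH_near_of_P A θ' θ u' u (q := B + a') hj (Nat.le_add_right _ _) hδ2
    rw [inf_comm (P θ u j)]
    linarith
  have h3 : cH A (D (n + a)) (D n ⊓ P θ u N) ≤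
      cH A (D (n + a)) (P θ u j ⊓ P θ' u' j ⊓ D n) + A.card * Real.log 5 := by
    have h4 := cH_context A (f := D (n + a)) (K := D n) (x := P θ u j) (X := P θ u N)
      (z := P θ' u' j) (P_anti θ u hN)
    have e : j = n + (m - B) := by omega
    have h5 : cH A (P θ' u' j) (P θ u j ⊓ D n) ≤ A.card * Real.log 5 := by
      rw [e]
      refine cH_P_P A u u' n (m - B) (le_trans ?_ hδ) inf_le_left inf_le_right
      exact mul_le_mul_of_nonneg_left (pow_le_pow_right₀ (by norm_num) (Nat.sub_le _ _))
        (abs_nonneg _)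
    linarith
  have hd := dlog_nonneg a
  have h4 := mul_le_mul_of_nonneg_left (add_le_add h1 h2) hd
  have h5 := mul_le_mul_of_nonneg_left h3 (sq_nonneg κ)
  linarith

lemma sum_shift_le {f : ℕ → ℝ} (hf : ∀ k, 0 ≤ f k) {L d N : ℕ} (h : L + d ≤ N) :
    ∑ i ∈ Finset.range L, f (i + d) ≤ ∑ k ∈ Finset.range N, f k := by
  have h1 := Finset.sum_range_add f d L
  have h2 : ∑ k ∈ Finset.range (d + L), f k ≤ ∑ k ∈ Finset.range N, f k :=
    Finset.sum_le_sum_of_subset_of_nonneg (Finset.range_mono (by omega)) fun i _ _ => hf i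
  have h3 : 0 ≤ ∑ k ∈ Finset.range d, f k := Finset.sum_nonneg fun i _ => hf i
  simp only [add_comm _ d]
  linarith

lemma sum_sum_shift_le {f : ℕ → ℝ} (hf : ∀ k, 0 ≤ f k) {L d q N : ℕ} (h : L + d + q ≤ N) :
    ∑ i ∈ Finset.range L, ∑ r ∈ Finset.range q, f (i + d + r) ≤
      q * ∑ k ∈ Finset.range N, f k := by
  rw [Finset.sum_comm]
  refine (Finset.sum_le_sum (g := fun _ => ∑ k ∈ Finset.range N, f k) fun r hr => ?_).trans_eq
    (by rw [Finset.sum_const, nsmul_eq_mul, Finset.card_range])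
  have := Finset.mem_range.1 hr
  simp only [add_assoc]
  exact sum_shift_le hf (by omega)

lemma dlog_le {L : ℕ} (hL : 1 ≤ L) : dlog L ≤ 6 * L := by
  have h1 : (2 * 2 ^ L + 1 : ℝ) ≤ 2 ^ (L + 2) := by
    have : (1 : ℝ) ≤ 2 ^ L := one_le_pow₀ (by norm_num)
    rw [pow_add]; linarith
  have h2 : dlog L ≤ Real.log (2 ^ (L + 2) * 2 ^ (L + 2)) :=
    Real.log_le_log (by positivity) (mul_le_mul h1 h1 (by positivity) (by positivity))
  rw [← pow_add, Real.log_pow] at h2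
  have h3 := Real.log_two_lt_d9
  have h4 : (1 : ℝ) ≤ L := by exact_mod_cast hL
  push_cast at h2
  nlinarith

lemma Good.le_six {C s v : ℝ} {E : Set ℝ} (hE : E.Nonempty) (h : Good C s E v) : v ≤ 6 := by
  obtain ⟨x, hx⟩ := hE
  obtain ⟨L, hL, n, A, hA, hc, hv⟩ := h Unit (fun _ => x) (fun _ => hx) 1
  have h1 : G A (D n) = G A ⊤ := by
    have := G_inf_of_const (s := ⊤) hc
    rwa [inf_top_eq] at this
  have h2 := G_mono A (le_top : P x 0 (n + L) ≤ ⊤)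
  have h3 := cH_D_D A n L
  have h4 : D (n + L) ⊓ D n = D (n + L) := inf_eq_left.2 (D_anti (Nat.le_add_right _ _))
  rw [cH, h4] at h3
  have h5 := dlog_le hL
  have hp : (0 : ℝ) < A.card := by exact_mod_cast hA.1.card_pos
  have hL' : (0 : ℝ) < L := by exact_mod_cast hL
  simp only [Finset.univ_unique, Finset.sum_singleton, Fintype.card_unit, Nat.cast_one,
    mul_one] at hv
  have h6 : v * (L * A.card) ≤ 6 * (L * A.card) := by
    nlinarith [mul_le_mul_of_nonneg_left h5 hp.le]
  exact le_of_mul_le_mul_right h6 (by positivity)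

lemma exists_J {s : ℝ} (C : ℝ) (hs : s < 1) : ∃ J : ℕ, C * (4 * (J : ℝ)) ^ s < J / 2 := by
  have h : Filter.Tendsto (fun x : ℝ => x ^ (1 - s)) Filter.atTop Filter.atTop :=
    tendsto_rpow_atTop (by linarith)
  have h2 : Filter.Tendsto (fun J : ℕ => (4 * (J : ℝ)) ^ (1 - s)) Filter.atTop Filter.atTop :=
    h.comp (Filter.Tendsto.const_mul_atTop (by norm_num) tendsto_natCast_atTop_atTop)
  obtain ⟨J, hJ, hJ1⟩ := ((h2.eventually_gt_atTop (8 * C)).and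
    (Filter.eventually_ge_atTop 1)).exists
  refine ⟨J, ?_⟩
  have hp : (0 : ℝ) < 4 * J := by
    have : (1 : ℝ) ≤ J := by exact_mod_cast hJ1
    linarith
  have e : (4 * (J : ℝ)) ^ (1 - s) * (4 * J) ^ s = 4 * J := by
    rw [← Real.rpow_add hp]; simp
  have hq := Real.rpow_pos_of_pos hp s
  nlinarith [mul_lt_mul_of_pos_right hJ hq]

/-- The dyadic size of a small positive number. -/
lemma exists_level {δ : ℝ} (hδ : 0 < δ) {M : ℕ} (h : δ * 2 ^ M ≤ 1) :
    ∃ m ≥ M, δ * 2 ^ m ≤ 1 ∧ 1 < δ * 2 ^ (m + 1) := by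
  have h1 : ∃ m : ℕ, 1 < δ * 2 ^ (m + 1) := by
    obtain ⟨m, hm⟩ := pow_unbounded_of_one_lt (1 / δ) (one_lt_two : (1 : ℝ) < 2)
    refine ⟨m, ?_⟩
    rw [div_lt_iff₀ hδ] at hm
    rw [pow_succ]
    linarith
  refine ⟨Nat.find h1, ?_, ?_, Nat.find_spec h1⟩
  · by_contra hlt
    have h2 := Nat.find_spec h1
    have h3 : (2 : ℝ) ^ (Nat.find h1 + 1) ≤ 2 ^ M := pow_le_pow_right₀ (by norm_num) (by omega)
    nlinarith
  · rcases Nat.eq_zero_or_pos (Nat.find h1) with h0 | h0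
    · rw [h0]
      have : (1 : ℝ) ≤ 2 ^ M := one_le_pow₀ (by norm_num)
      nlinarith
    · have h2 := Nat.find_min h1 (Nat.sub_lt h0 one_pos)
      rw [show Nat.find h1 - 1 + 1 = Nat.find h1 by omega] at h2
      exact not_lt.1 h2

end Core2

end AssouadProj

/-! ### The contradiction for accumulating slopes -/

namespace AssouadProj

section Core3

open scoped Classical

/-- `pair_step` summed over all slopes, each paired with its neighbour under `σ`, and over all
squares of levels `n₀ ≤ n < n₀ + L'`. -/
lemma pair_sum {ι : Type} [Fintype ι] {W u : ι → ℝ} (σ : Equiv.Perm ι) {mm : ι → ℕ}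
    (A : Finset (ℝ × ℝ)) {κ C s : ℝ} (hA : ∀ i, Hom C s (W i) A)
    {Θ : ℕ} (hθ : ∀ i, |W i| ≤ Θ) (J a a' : ℕ) (hJ : C * (4 * J) ^ s < J / 2) (hκ : 0 < κ)
    (hκJ : 8 * κ * J ≤ 1 / 2) (ha' : 40 * (J : ℝ) * 2 ^ a ≤ 2 ^ a') {n₀ B l L' N : ℕ}
    (hl : ∀ i, l + a' + B + a ≤ mm i) (hN : ∀ i, L' + mm i + a' ≤ N) {N' : ℕ} (hN' : N ≤ N')
    (hδ : ∀ i, |W (σ i) - W i| * 2 ^ mm i ≤ 1)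
    (hδ' : ∀ i, 1 < |W (σ i) - W i| * 2 ^ (mm i + 1)) :
    κ ^ 2 * (∑ i, ∑ t ∈ Finset.range L', cH A (D (n₀ + t + a)) (D (n₀ + t) ⊓ P (W i) (u i) (n₀ + N'))
        - Fintype.card ι * L' * A.card * (Real.log 5 + Real.log (6 * (2 * Θ + 3)))) ≤
      dlog a * (2 * (B + a' : ℕ) * ∑ i, ∑ k ∈ Finset.range N, psi A (W i) (u i) l (n₀ + k) +
        2 * Real.log 5 * ∑ i, ∑ k ∈ Finset.range N', ((near A (W i) (u i) B (n₀ + k)).card : ℝ)) := by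
  set c₂ := Real.log 5 + Real.log (6 * (2 * (Θ : ℝ) + 3)) with hc₂
  set ps : ι → ℕ → ℝ := fun i k => psi A (W i) (u i) l (n₀ + k) with hps
  set ne : ι → ℕ → ℝ := fun i k => ((near A (W i) (u i) B (n₀ + k)).card : ℝ) with hne
  have hps0 : ∀ i k, 0 ≤ ps i k := fun i k => psi_nonneg _ _ _ _ _
  have hne0 : ∀ i k, 0 ≤ ne i k := fun i k => Nat.cast_nonneg _
  have hd := dlog_nonneg a
  have h5 : 0 ≤ Real.log 5 := Real.log_nonneg (by norm_num)
  have h1 : ∀ i, ∀ t ∈ Finset.range L',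
      κ ^ 2 * (cH A (D (n₀ + t + a)) (D (n₀ + t) ⊓ P (W i) (u i) (n₀ + N')) - A.card * c₂) ≤
      dlog a * (∑ r ∈ Finset.range (B + a'), ps i (t + (mm i - B) + r) +
        ∑ r ∈ Finset.range (B + a'), ps (σ i) (t + (mm i - B) + r) +
        Real.log 5 * (ne (σ i) (t + (mm i - B)) + ne i (t + (mm i - B)))) := by
    intro i t ht
    have ht' := Finset.mem_range.1 ht
    have hl' := hl i
    have hN1 := hN i
    have := pair_step A (u := u i) (u' := u (σ i)) (hA i) (hθ i) J a a' hJ hκ hκJ ha'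
      (n := n₀ + t) (j := n₀ + (t + (mm i - B))) (m := mm i) (B := B) (l := l) (N := n₀ + N')
      (by omega) (by omega) (by omega) (by omega) (hδ i) (hδ' i)
    simpa only [hps, hne, add_assoc] using this
  have h2 : ∀ i, κ ^ 2 * (∑ t ∈ Finset.range L',
      cH A (D (n₀ + t + a)) (D (n₀ + t) ⊓ P (W i) (u i) (n₀ + N')) - L' * A.card * c₂) ≤
      dlog a * ((B + a' : ℕ) * ∑ k ∈ Finset.range N, ps i k +
        (B + a' : ℕ) * ∑ k ∈ Finset.range N, ps (σ i) k +
        Real.log 5 * (∑ k ∈ Finset.range N', ne (σ i) k + ∑ k ∈ Finset.range N', ne i k)) := by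
    intro i
    have hl' := hl i
    have hN1 := hN i
    have h3 := Finset.sum_le_sum (h1 i)
    rw [← Finset.mul_sum, ← Finset.mul_sum, Finset.sum_sub_distrib, Finset.sum_const, nsmul_eq_mul,
      Finset.card_range, Finset.sum_add_distrib, Finset.sum_add_distrib, ← Finset.mul_sum,
      Finset.sum_add_distrib] at h3
    have h4 := sum_sum_shift_le (hps0 i) (L := L') (d := mm i - B) (q := B + a') (N := N)
      (by omega)
    have h6 := sum_sum_shift_le (hps0 (σ i)) (L := L') (d := mm i - B) (q := B + a') (N := N)
      (by omega)
    have h7 := sum_shift_le (hne0 i) (L := L') (d := mm i - B) (N := N') (by omega)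
    have h8 := sum_shift_le (hne0 (σ i)) (L := L') (d := mm i - B) (N := N') (by omega)
    have h9 := mul_le_mul_of_nonneg_left (add_le_add h8 h7) h5
    have h10 := mul_le_mul_of_nonneg_left (add_le_add (add_le_add h4 h6) h9) hd
    calc _ = κ ^ 2 * (∑ t ∈ Finset.range L',
          cH A (D (n₀ + t + a)) (D (n₀ + t) ⊓ P (W i) (u i) (n₀ + N')) -
            L' * (A.card * c₂)) := by ring
      _ ≤ _ := h3.trans h10
  have h3 := Finset.sum_le_sum fun i (_ : i ∈ Finset.univ) => h2 i
  rw [← Finset.mul_sum, ← Finset.mul_sum, Finset.sum_sub_distrib, Finset.sum_const, nsmul_eq_mul,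
    Finset.card_univ, Finset.sum_add_distrib, Finset.sum_add_distrib, ← Finset.mul_sum,
    ← Finset.mul_sum, ← Finset.mul_sum, Finset.sum_add_distrib,
    Equiv.sum_comp σ (fun i => ∑ k ∈ Finset.range N, ps i k),
    Equiv.sum_comp σ (fun i => ∑ k ∈ Finset.range N', ne i k)] at h3
  calc _ = _ := by rw [← mul_assoc, ← mul_assoc]
    _ ≤ _ := h3
    _ = _ := by ring

set_option maxHeartbeats 1000000 in
/-- If slopes accumulate, no positive fibre entropy per scale is compatible with projections of
dimension `s < 1`. -/
theorem not_good {C s v₀ : ℝ} {E : Set ℝ} {Θ : ℕ} (hE : E.Nonempty) (hΘ : ∀ x ∈ E, |x| ≤ Θ)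
    (hacc : ∀ x ∈ E, ∀ ε > 0, ∃ y ∈ E, y ≠ x ∧ |y - x| < ε) (hs : s < 1) (hv₀ : 0 < v₀) :
    ¬ Good C s E v₀ := by
  intro hgood₀
  have h5 : 0 ≤ Real.log 5 := Real.log_nonneg (by norm_num)
  set c₂ := Real.log 5 + Real.log (6 * (2 * (Θ : ℝ) + 3)) with hc₂
  obtain ⟨a, ha⟩ : ∃ a : ℕ, c₂ + 1 ≤ a * (v₀ / 4) := by
    obtain ⟨a, ha⟩ := exists_nat_ge ((c₂ + 1) / (v₀ / 4))
    exact ⟨a, (div_le_iff₀ (by positivity)).1 ha⟩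
  obtain ⟨J, hJ⟩ := exists_J C hs
  obtain ⟨a', ha'⟩ : ∃ a' : ℕ, 40 * (J : ℝ) * 2 ^ a ≤ 2 ^ a' := by
    obtain ⟨a', h⟩ := pow_unbounded_of_one_lt (40 * (J : ℝ) * 2 ^ a) (one_lt_two : (1 : ℝ) < 2)
    exact ⟨a', h.le⟩
  set κ : ℝ := 1 / (16 * (J + 1)) with hκdef
  have hκ : 0 < κ := by positivity
  have hκJ : 8 * κ * J ≤ 1 / 2 := by
    rw [hκdef]
    have : (0 : ℝ) ≤ J := Nat.cast_nonneg J
    rw [mul_one_div, div_mul_eq_mul_div, div_le_iff₀ (by positivity)]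
    linarith
  obtain ⟨B, hB1, hB⟩ : ∃ B : ℕ, 1 ≤ B ∧ dlog a * 36 * Real.log 5 < κ ^ 2 * 2 ^ B := by
    obtain ⟨B, h⟩ := pow_unbounded_of_one_lt (dlog a * 36 * Real.log 5 / κ ^ 2)
      (one_lt_two : (1 : ℝ) < 2)
    rw [div_lt_iff₀ (by positivity)] at h
    refine ⟨B + 1, by omega, ?_⟩
    rw [pow_succ 2 B]
    have : 0 < κ ^ 2 * 2 ^ B := by positivity
    linarith
  have hd := dlog_nonneg a
  have hqpos : (0 : ℝ) < (B + a' : ℕ) := by exact_mod_cast (by omega : 0 < B + a')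
  set η : ℝ := min (v₀ / 2) (κ ^ 2 / (16 * (B + a' : ℕ) * (dlog a + 1))) with hη
  have hηpos : 0 < η := lt_min (by positivity) (by positivity)
  have hη1 : η ≤ v₀ / 2 := min_le_left _ _
  have hη2 : η * (16 * (B + a' : ℕ) * (dlog a + 1)) ≤ κ ^ 2 :=
    (le_div_iff₀ (by positivity)).1 (min_le_right _ _)
  -- a nearly maximal rate `v`
  have hbdd : BddAbove {v | Good C s E v} := ⟨6, fun v hv => hv.le_six hE⟩
  set V := sSup {v | Good C s E v} with hV
  have hV0 : v₀ ≤ V := le_csSup hbdd hgood₀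
  obtain ⟨v, hv, hvV⟩ := exists_lt_of_lt_csSup ⟨v₀, hgood₀⟩ (show V - η < V by linarith)
  have hv1 : ¬ Good C s E (V + η) := fun h => by
    have := le_csSup hbdd h
    linarith
  unfold Good at hv1
  push Not at hv1
  obtain ⟨ι, hfin, hne, w, hw, L₀, hbad⟩ := hv1
  set c := Real.log 5 + Real.log (2 * (Θ : ℝ) + 3) with hc
  obtain ⟨l, hl0, hl1, hlc⟩ : ∃ l : ℕ, L₀ ≤ l ∧ 1 ≤ l ∧ c ≤ η * l := by
    obtain ⟨l, hl⟩ := exists_nat_ge (c / η)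
    refine ⟨max l (max L₀ 1), by omega, by omega, ?_⟩
    rw [div_le_iff₀ hηpos] at hl
    have : (l : ℝ) ≤ (max l (max L₀ 1) : ℕ) := by exact_mod_cast le_max_left _ _
    nlinarith
  -- neighbours of the slopes `w`
  have hnb : ∀ i, ∃ y ∈ E, y ≠ w i ∧ |y - w i| < 1 / 2 ^ (l + a' + B + a) := fun i =>
    hacc (w i) (hw i) _ (by positivity)
  choose w₂ hw₂ hw₂ne hw₂lt using hnb
  have hm : ∀ i, ∃ m ≥ l + a' + B + a, |w₂ i - w i| * 2 ^ m ≤ 1 ∧ 1 < |w₂ i - w i| * 2 ^ (m + 1) :=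
    fun i => exists_level (abs_pos.2 (sub_ne_zero.2 (hw₂ne i)))
      ((lt_div_iff₀ (by positivity)).1 (hw₂lt i)).le
  choose m hmge hm1 hm2 using hm
  set W : ι ⊕ ι → ℝ := Sum.elim w w₂ with hWdef
  set mm : ι ⊕ ι → ℕ := Sum.elim m m with hmmdef
  have hWE : ∀ i, W i ∈ E := by rintro (i | i); exacts [hw i, hw₂ i]
  obtain ⟨Mx, hMx⟩ : ∃ Mx, ∀ i, mm i ≤ Mx :=
    ⟨Finset.univ.sup mm, fun i => Finset.le_sup (Finset.mem_univ i)⟩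
  set wd := l + Mx + a' with hwd
  obtain ⟨L₁, hL₁a, hL₁b, hL₁c⟩ : ∃ L₁ : ℕ, wd + 1 ≤ L₁ ∧
      Real.log 5 + dlog l ≤ η * L₁ ∧ Real.log 5 + dlog a + dlog wd ≤ v₀ / 4 * L₁ := by
    obtain ⟨x, hx⟩ := exists_nat_ge ((Real.log 5 + dlog l) / η)
    obtain ⟨y, hy⟩ := exists_nat_ge ((Real.log 5 + dlog a + dlog wd) / (v₀ / 4))
    rw [div_le_iff₀ (by positivity)] at hx hy
    have hx' : (x : ℝ) ≤ (max (wd + 1) (max x y) : ℕ) := by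
      exact_mod_cast (le_max_left x y).trans (le_max_right _ _)
    have hy' : (y : ℝ) ≤ (max (wd + 1) (max x y) : ℕ) := by
      exact_mod_cast (le_max_right x y).trans (le_max_right _ _)
    refine ⟨max (wd + 1) (max x y), le_max_left _ _, ?_, ?_⟩ <;> nlinarith
  obtain ⟨L, hL, n₀, A, hA, hconst, hsum⟩ := hv (ι ⊕ ι) W hWE L₁
  have hLr : (L₁ : ℝ) ≤ L := by exact_mod_cast hL
  have hL2 : Real.log 5 + dlog l ≤ η * L :=
    hL₁b.trans (mul_le_mul_of_nonneg_left hLr hηpos.le)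
  have hL3 : Real.log 5 + dlog a + dlog wd ≤ v₀ / 4 * L :=
    hL₁c.trans (mul_le_mul_of_nonneg_left hLr (by positivity))
  have hLpos : (0 : ℝ) < L := by exact_mod_cast (by omega : 0 < L)
  have hApos : (0 : ℝ) < A.card := by exact_mod_cast hA.1.card_pos
  obtain ⟨K, hK, hKpos⟩ : ∃ K : ℝ, K = Fintype.card (ι ⊕ ι) ∧ 0 < K :=
    ⟨_, rfl, by exact_mod_cast Fintype.card_pos⟩
  obtain ⟨M, hMl, hMl'⟩ : ∃ M, M * l ≤ L ∧ L ≤ M * l + l :=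
    ⟨L / l, Nat.div_mul_le_self L l, by
      have := Nat.div_add_mod L l
      have h2 := Nat.mod_lt L (by omega : 0 < l)
      rw [mul_comm l] at this
      omega⟩
  obtain ⟨L', hL'⟩ : ∃ L', L' + Mx + a' = M * l := ⟨M * l - Mx - a', by omega⟩
  have hoff := fun i => exists_offset A (W i) hB1 n₀ L
  choose u hu using hoff
  have hΘW : ∀ i, |W i| ≤ Θ := fun i => hΘ _ (hWE i)
  -- upper bound for the information shared by strips and squares
  have hbad' : ∀ (n : ℕ) (A : Finset (ℝ × ℝ)), Adm C s E A → (∀ p ∈ A, ∀ q ∈ A, D n p q) →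
      ∑ i, (G A (P (w i) 0 (n + l)) - G A (D (n + l))) ≤ (V + η) * l * A.card * Fintype.card ι :=
    fun n A h1 h2 => (hbad l hl0 n A h1 h2).le
  have hclose : ∀ i, |w i - w₂ i| * 2 ^ l ≤ 1 := fun i => by
    rw [abs_sub_comm]
    refine le_trans (mul_le_mul_of_nonneg_left (pow_le_pow_right₀ (by norm_num) ?_)
      (abs_nonneg _)) (hm1 i)
    have := hmge i
    omega
  have hblock : ∀ n, ∑ i, (G A (D n ⊓ P (W i) (u i) (n + l)) - G A (D (n + l))) ≤
      ((V + η) * l + Real.log 5) * A.card * Fintype.card (ι ⊕ ι) := by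
    intro n
    have e1 := block_bound (u := fun i => u (Sum.inl i)) hbad' (w₂ := w)
      (fun i => by simp) hA.2 n
    have e2 := block_bound (u := fun i => u (Sum.inr i)) hbad' (w₂ := w₂) hclose hA.2 n
    rw [Fintype.sum_sum_type, Fintype.card_sum]
    push_cast
    simp only [hWdef, Sum.elim_inl, Sum.elim_inr]
    linarith
  have hpsi := psi_total hΘW hblock hconst hsum hMl hMl'
  rw [← hK] at hpsi hsum
  have hpsi' : ∑ i, ∑ r ∈ Finset.range (M * l), psi A (W i) (u i) l (n₀ + r) ≤
      K * A.card * (4 * η * L) := by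
    refine hpsi.trans (mul_le_mul_of_nonneg_left ?_ (by positivity))
    have hMr : (M : ℝ) * l ≤ L := by exact_mod_cast hMl
    have e1 : (M : ℝ) * ((V + η) * l + Real.log 5 + Real.log (2 * Θ + 3)) ≤
        M * ((V + η) * l + η * l) := by
      refine mul_le_mul_of_nonneg_left ?_ (Nat.cast_nonneg M)
      linarith
    have e2 : (M : ℝ) * ((V + η) * l + η * l) ≤ (V + 2 * η) * L := by nlinarith
    nlinarith
  -- lower bound for the entropy of squares inside strips
  have hfib : a * (K * A.card * (v₀ / 4 * L)) ≤ ∑ i, ∑ t ∈ Finset.range L',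
      cH A (D (n₀ + t + a)) (D (n₀ + t) ⊓ P (W i) (u i) (n₀ + L)) := by
    have e1 := Finset.sum_le_sum fun i (_ : i ∈ Finset.univ) =>
      fibre_entropy A (W i) (u i) n₀ a L' wd (n₀ + L) (by omega) hconst
    refine le_trans ?_ e1
    rw [← Finset.mul_sum]
    refine mul_le_mul_of_nonneg_left ?_ (Nat.cast_nonneg a)
    have e2 : ∀ i, (G A (P (W i) 0 (n₀ + L)) - G A (D (n₀ + L))) -
        A.card * (Real.log 5 + dlog a + dlog wd) ≤
        G A (P (W i) (u i) (n₀ + L)) - G A (D (n₀ + L)) - A.card * (dlog a + dlog wd) := fun i => by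
      linarith [G_P_offset A (W i) (u i) (n₀ + L)]
    refine le_trans ?_ (Finset.sum_le_sum fun i _ => e2 i)
    rw [Finset.sum_sub_distrib, Finset.sum_const, nsmul_eq_mul, Finset.card_univ, ← hK]
    have hKA : 0 < K * A.card := by positivity
    have e3 : v₀ / 2 * L ≤ v * L := mul_le_mul_of_nonneg_right (by linarith) hLpos.le
    have e4 := mul_le_mul_of_nonneg_left e3 hKA.le
    have e5 := mul_le_mul_of_nonneg_left hL3 hKA.le
    linarith
  have hnear : 2 ^ B * ∑ i, ∑ k ∈ Finset.range L, ((near A (W i) (u i) B (n₀ + k)).card : ℝ) ≤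
      K * A.card * (9 * L) := by
    rw [Finset.mul_sum]
    refine (Finset.sum_le_sum fun i _ => hu i).trans_eq ?_
    rw [Finset.sum_const, nsmul_eq_mul, Finset.card_univ, ← hK]
    ring
  have hmain := pair_sum (u := u) (Equiv.sumComm ι ι) (mm := mm) (W := W)
    A (fun i => hA.2 _ (hWE i)) hΘW J a a' hJ hκ hκJ ha'
    (n₀ := n₀) (B := B) (l := l) (L' := L') (N := M * l)
    (by rintro (i | i) <;> exact hmge i) (fun i => by have := hMx i; omega) hMl
    (by
      rintro (i | i)
      · exact hm1 i
      · have := hm1 i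
        rwa [abs_sub_comm] at this)
    (by
      rintro (i | i)
      · exact hm2 i
      · have := hm2 i
        rwa [abs_sub_comm] at this)
  rw [← hK, ← hc₂] at hmain
  set S := ∑ i, ∑ t ∈ Finset.range L',
    cH A (D (n₀ + t + a)) (D (n₀ + t) ⊓ P (W i) (u i) (n₀ + L))
  set Ψ := ∑ i, ∑ r ∈ Finset.range (M * l), psi A (W i) (u i) l (n₀ + r)
  set Nr := ∑ i, ∑ k ∈ Finset.range L, ((near A (W i) (u i) B (n₀ + k)).card : ℝ)
  clear_value S Ψ Nr
  set Z := K * A.card * L with hZ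
  have hZpos : 0 < Z := by positivity
  have hc₂0 : 0 ≤ c₂ := by
    have : 0 ≤ Real.log (6 * (2 * (Θ : ℝ) + 3)) :=
      Real.log_nonneg (by linarith [(Nat.cast_nonneg Θ : (0 : ℝ) ≤ Θ)])
    linarith
  have f1 : Z ≤ S - K * L' * A.card * c₂ := by
    have hL'L : (L' : ℝ) ≤ L := by exact_mod_cast (by omega : L' ≤ L)
    have g1 : K * A.card * c₂ * L' ≤ K * A.card * c₂ * L :=
      mul_le_mul_of_nonneg_left hL'L (by positivity)
    have g2 := mul_le_mul_of_nonneg_left ha hZpos.le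
    rw [hZ] at *
    linarith
  have f2 : κ ^ 2 * Z ≤ dlog a * (2 * (B + a' : ℕ) * (Z * (4 * η)) + 2 * Real.log 5 * Nr) := by
    refine (mul_le_mul_of_nonneg_left f1 (sq_nonneg κ)).trans (hmain.trans ?_)
    refine mul_le_mul_of_nonneg_left (add_le_add_left ?_ _) hd
    refine mul_le_mul_of_nonneg_left (hpsi'.trans_eq (by rw [hZ]; ring)) (by positivity)
  have f3 : dlog a * (2 * (B + a' : ℕ) * (Z * (4 * η))) ≤ κ ^ 2 / 2 * Z := by
    have g1 : η * (16 * (B + a' : ℕ) * dlog a) ≤ κ ^ 2 := by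
      have : 0 < η * (16 * (B + a' : ℕ)) := by positivity
      linarith
    have g2 := mul_le_mul_of_nonneg_right g1 hZpos.le
    linarith
  have f4 : dlog a * (2 * Real.log 5 * Nr) * 2 ^ B < κ ^ 2 / 2 * Z * 2 ^ B := by
    have g1 := mul_lt_mul_of_pos_right hB hZpos
    have g2 : (dlog a * (2 * Real.log 5)) * (2 ^ B * Nr) ≤ (dlog a * (2 * Real.log 5)) * (9 * Z) :=
      mul_le_mul_of_nonneg_left (hnear.trans_eq (by rw [hZ]; ring)) (by positivity)
    linarith
  have f5 := lt_of_mul_lt_mul_right f4 (by positivity)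
  linarith

end Core3

end AssouadProj

namespace AssouadProj

/-! ### Covering numbers -/

section Covering

open scoped Classical

lemma le_coverNumber {α X : Type*} [PseudoMetricSpace X] {A : Set X} {r : ℝ} (hr : 0 ≤ r)
    (T : Finset α) (f : α → X) (hf : ∀ a ∈ T, f a ∈ A)
    (hsep : ∀ a ∈ T, ∀ b ∈ T, a ≠ b → r < dist (f a) (f b)) :
    (T.card : ℝ≥0∞) ≤ coverNumber A r := by
  unfold coverNumber
  refine le_iInf fun S => le_iInf fun hS => le_iInf fun hd => ?_
  have h1 : ∀ a ∈ T, ∃ s ∈ S, f a ∈ s := fun a ha => by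
    have := hS (hf a ha)
    simpa using this
  choose! g hg hfg using h1
  have : T.card ≤ S.card := Finset.card_le_card_of_injOn g (fun a ha => hg a ha) fun a ha b hb hab => by
    by_contra hne
    have h2 := hsep a ha b hb hne
    have h3 : edist (f a) (f b) ≤ ENNReal.ofReal r :=
      (Metric.edist_le_ediam_of_mem (hfg a ha) (hab ▸ hfg b hb)).trans (hd _ (hg a ha))
    rw [edist_dist, ENNReal.ofReal_le_ofReal_iff hr] at h3
    linarith
  exact_mod_cast this

lemma coverNumber_le {β X : Type*} [PseudoMetricSpace X] {A : Set X} {r : ℝ}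
    (f : X → β) (I : Finset β) (hI : ∀ p ∈ A, f p ∈ I)
    (hf : ∀ p ∈ A, ∀ q ∈ A, f p = f q → dist p q ≤ r) :
    coverNumber A r ≤ I.card := by
  unfold coverNumber
  have h1 : A ⊆ ⋃ s ∈ I.image (fun k => A ∩ f ⁻¹' {k}), s := fun p hp => by
    simp only [mem_iUnion, Finset.mem_image, exists_prop]
    exact ⟨_, ⟨f p, hI p hp, rfl⟩, hp, rfl⟩
  have h2 : ∀ s ∈ I.image (fun k => A ∩ f ⁻¹' {k}), Metric.ediam s ≤ ENNReal.ofReal r := by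
    intro s hs
    obtain ⟨k, _, rfl⟩ := Finset.mem_image.1 hs
    refine Metric.ediam_le fun p hp q hq => ?_
    rw [edist_dist]
    exact ENNReal.ofReal_le_ofReal (hf p hp.1 q hq.1 (hp.2.trans hq.2.symm))
  refine (iInf_le _ (I.image (fun k => A ∩ f ⁻¹' {k}))).trans
    ((iInf_le _ h1).trans ((iInf_le _ h2).trans ?_))
  exact_mod_cast Finset.card_image_le

/-- An orthogonal projection of dimension less than `s` satisfies the `Hom` bound of exponent `s`,
uniformly over finite subsets. -/
lemma exists_Hom {θ s : ℝ} {F : Set (ℝ × ℝ)} (hcos : Real.cos θ ≠ 0) (hs0 : s ≤ 1)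
    (hs : assouadDim (projDir θ '' F) < s) :
    ∃ N : ℕ, ∀ A : Finset (ℝ × ℝ), (∀ p ∈ A, p ∈ F) → Hom N s (Real.tan θ) A := by
  set X := projDir θ '' F with hX
  have hne : (1 : ℝ) ∈ {s : ℝ | 0 ≤ s ∧ ∃ C : ℝ, 0 < C ∧ ∀ x ∈ X, ∀ r R : ℝ, 0 < r → r < R →
      coverNumber (X ∩ Metric.ball x R) r ≤ ENNReal.ofReal (C * (R / r) ^ s)} := by
    refine ⟨zero_le_one, 4, by norm_num, fun x _ r R hr hR => ?_⟩
    have hR0 : 0 < R := hr.trans hR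
    refine (coverNumber_le (fun y => ⌊(y - x) / r⌋) (Finset.Icc (-⌈R / r⌉) ⌊R / r⌋) ?_ ?_).trans ?_
    · intro p hp
      have h1 := hp.2
      rw [Metric.mem_ball, Real.dist_eq, abs_lt] at h1
      rw [Finset.mem_Icc, ← Int.floor_neg]
      refine ⟨Int.floor_mono ?_, Int.floor_mono ?_⟩
      · rw [← neg_div]; gcongr; linarith
      · gcongr; linarith
    · intro p _ q _ hpq
      have h1 := Int.abs_sub_lt_one_of_floor_eq_floor hpq
      rw [← sub_div, abs_div, abs_of_pos hr, div_lt_one hr] at h1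
      rw [Real.dist_eq]
      have e : p - x - (q - x) = p - q := by ring
      rw [e] at h1
      exact h1.le
    · rw [← ENNReal.ofReal_natCast, Int.card_Icc]
      refine ENNReal.ofReal_le_ofReal ?_
      have h1 : (1 : ℝ) < R / r := (one_lt_div hr).2 hR
      have h2 : (0 : ℤ) ≤ ⌊R / r⌋ := Int.floor_nonneg.2 (by linarith)
      have h3 : (0 : ℤ) ≤ ⌈R / r⌉ := Int.ceil_nonneg (by linarith)
      have h4 : (((⌊R / r⌋ + 1 - -⌈R / r⌉).toNat : ℤ) : ℝ) = (⌊R / r⌋ + 1 - -⌈R / r⌉ : ℤ) := by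
        rw [Int.toNat_of_nonneg (by omega)]
      have h5 := Int.floor_le (R / r)
      have h6 := Int.ceil_lt_add_one (R / r)
      rw [Int.cast_natCast] at h4
      rw [h4, Real.rpow_one]
      push_cast
      linarith
  obtain ⟨s', ⟨hs'0, C, hC, hcov⟩, hs'⟩ := exists_lt_of_csInf_lt ⟨1, hne⟩ hs
  obtain ⟨N, hN⟩ := exists_nat_ge (3 * C)
  refine ⟨N, fun A hA x R r T hr hR hT hTx hsep => ?_⟩
  have hs00 : 0 ≤ s := by linarith
  have hR0 : 0 < R := hr.trans_le hR
  rcases T.eq_empty_or_nonempty with rfl | ⟨a₀, ha₀⟩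
  · simp only [Finset.card_empty, Nat.cast_zero]; positivity
  have hpr : ∀ p, projDir θ p = Real.cos θ * xi (Real.tan θ) p := fun p => by
    rw [projDir, xi, Real.tan_eq_sin_div_cos]; field_simp
  have hk : 0 < |Real.cos θ| := abs_pos.2 hcos
  have hdist : ∀ p q, dist (projDir θ p) (projDir θ q) =
      |Real.cos θ| * |xi (Real.tan θ) p - xi (Real.tan θ) q| := fun p q => by
    rw [Real.dist_eq, hpr, hpr, ← mul_sub, abs_mul]
  have h1 := hcov (projDir θ a₀) ⟨a₀, hA _ (hT ha₀), rfl⟩ (|Real.cos θ| * r)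
    (|Real.cos θ| * (3 * R)) (by positivity) (by gcongr; linarith)
  have h2 := le_coverNumber (A := X ∩ Metric.ball (projDir θ a₀) (|Real.cos θ| * (3 * R)))
    (r := |Real.cos θ| * r) (by positivity) T (projDir θ)
    (fun a ha => ⟨⟨a, hA _ (hT ha), rfl⟩, by
      rw [Metric.mem_ball, hdist]
      have h3 := abs_le.1 (hTx a ha)
      have h4 := abs_le.1 (hTx a₀ ha₀)
      gcongr
      rw [abs_lt]
      constructor <;> linarith⟩)
    (fun a ha b hb hab => by
      rw [hdist]
      exact mul_lt_mul_of_pos_left (hsep a ha b hb hab) hk)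
  have h3 := h2.trans h1
  have e : |Real.cos θ| * (3 * R) / (|Real.cos θ| * r) = 3 * (R / r) := by field_simp
  have hRr : 1 ≤ R / r := (one_le_div hr).2 hR
  rw [e, ← ENNReal.ofReal_natCast, ENNReal.ofReal_le_ofReal_iff (by positivity)] at h3
  have h4 : (3 * (R / r)) ^ s' ≤ 3 * (R / r) ^ s := by
    refine (Real.rpow_le_rpow_of_exponent_le (by linarith) hs'.le).trans ?_
    rw [Real.mul_rpow (by norm_num) (by positivity)]
    gcongr
    calc (3 : ℝ) ^ s ≤ 3 ^ (1 : ℝ) := Real.rpow_le_rpow_of_exponent_le (by norm_num) hs0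
      _ = 3 := Real.rpow_one 3
  have h5 : 0 ≤ (R / r) ^ s := by positivity
  calc (T.card : ℝ) ≤ C * (3 * (R / r) ^ s) := h3.trans (mul_le_mul_of_nonneg_left h4 hC.le)
    _ = 3 * C * (R / r) ^ s := by ring
    _ ≤ N * (R / r) ^ s := mul_le_mul_of_nonneg_right hN h5

end Covering

end AssouadProj

namespace AssouadProj

/-! ### From Assouad dimension to fibre entropy -/

section Reduction

open scoped Classical

/-- A homothety of the plane with ratio `k`, sending `c` to the origin. -/
def hty (k : ℝ) (c p : ℝ × ℝ) : ℝ × ℝ := (k * (p.1 - c.1), k * (p.2 - c.2))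

lemma hty_injective {k : ℝ} (hk : k ≠ 0) (c : ℝ × ℝ) : Function.Injective (hty k c) := by
  intro p q h
  have h1 : k * (p.1 - c.1) = k * (q.1 - c.1) := congrArg Prod.fst h
  have h2 : k * (p.2 - c.2) = k * (q.2 - c.2) := congrArg Prod.snd h
  have h3 := mul_left_cancel₀ hk h1
  have h4 := mul_left_cancel₀ hk h2
  exact Prod.ext (by linarith) (by linarith)

lemma Hom.hty {C s θ k : ℝ} {A : Finset (ℝ × ℝ)} (h : Hom C s θ A) (hk : 0 < k) (c : ℝ × ℝ) :
    Hom C s θ (A.image (hty k c)) := by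
  intro x R r T hr hR hT hTx hsep
  obtain ⟨T', hT', rfl⟩ := Finset.subset_image_iff.1 hT
  have hxi : ∀ p, xi θ (AssouadProj.hty k c p) = k * (xi θ p - xi θ c) := fun p => by
    simp only [xi, AssouadProj.hty]; ring
  rw [Finset.card_image_of_injective _ (hty_injective hk.ne' c)]
  have h1 := h (x / k + xi θ c) (R / k) (r / k) T' (by positivity) (by gcongr) hT' ?_ ?_
  · rwa [div_div_div_cancel_right₀ hk.ne'] at h1
  · intro a ha
    have h2 := hTx _ (Finset.mem_image_of_mem _ ha)
    rw [hxi] at h2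
    rw [le_div_iff₀ hk, ← abs_of_pos hk, ← abs_mul, abs_of_pos hk]
    have e : (xi θ a - (x / k + xi θ c)) * k = k * (xi θ a - xi θ c) - x := by field_simp; ring
    rwa [e]
  · intro a ha b hb hab
    have h2 := hsep _ (Finset.mem_image_of_mem _ ha) _ (Finset.mem_image_of_mem _ hb)
      fun e => hab (hty_injective hk.ne' c e)
    rw [hxi, hxi] at h2
    rw [div_lt_iff₀ hk]
    rw [show k * (xi θ a - xi θ c) - k * (xi θ b - xi θ c) = (xi θ a - xi θ b) * k by ring,
      abs_mul, abs_of_pos hk] at h2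
    exact h2

/-- The number of strips of level `L` met by a subset of the unit square. -/
lemma card_strips {C s θ : ℝ} {Θ : ℕ} {A : Finset (ℝ × ℝ)} (h : Hom C s θ A)
    (hA : ∀ p ∈ A, |xi θ p| ≤ 1 + Θ) (L : ℕ) :
    ((A.image fun p => ⌊2 ^ L * (xi θ p + 0)⌋).card : ℝ) ≤ 2 * (C * ((1 + Θ) * 2 ^ L) ^ s) := by
  set f : ℝ × ℝ → ℤ := fun p => ⌊2 ^ L * (xi θ p + 0)⌋ with hf
  have hrep : ∀ k ∈ A.image f, ∃ p ∈ A, f p = k := fun k hk => Finset.mem_image.1 hk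
  choose! g hgA hfg using hrep
  have hp : (0 : ℝ) < 2 ^ L := by positivity
  have h1p : (1 : ℝ) ≤ 2 ^ L := one_le_pow₀ (by norm_num)
  -- strips whose indices have the same parity are separated
  have key : ∀ S ⊆ A.image f, (∀ i ∈ S, ∀ j ∈ S, i ≠ j → 2 ≤ |i - j|) →
      (S.card : ℝ) ≤ C * ((1 + Θ) * 2 ^ L) ^ s := by
    intro S hS hsep
    have hinj : Set.InjOn g S := fun i hi j hj hij => by
      rw [← hfg i (hS hi), ← hfg j (hS hj), hij]
    rw [← Finset.card_image_of_injOn hinj]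
    have := h 0 (1 + Θ) (1 / 2 ^ L) (S.image g) (by positivity) ?_ ?_ ?_ ?_
    · rwa [div_div_eq_mul_div, div_one] at this
    · rw [div_le_iff₀ hp]
      have : (0 : ℝ) ≤ Θ := Nat.cast_nonneg Θ
      nlinarith
    · intro p hp
      obtain ⟨i, hi, rfl⟩ := Finset.mem_image.1 hp
      exact hgA i (hS hi)
    · intro p hp
      obtain ⟨i, hi, rfl⟩ := Finset.mem_image.1 hp
      rw [sub_zero]
      exact hA _ (hgA i (hS hi))
    · intro p hp q hq hpq
      obtain ⟨i, hi, rfl⟩ := Finset.mem_image.1 hp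
      obtain ⟨j, hj, rfl⟩ := Finset.mem_image.1 hq
      have hij : i ≠ j := fun e => hpq (by rw [e])
      have h2 := hsep i hi j hj hij
      have e1 := hfg i (hS hi)
      have e2 := hfg j (hS hj)
      simp only [hf, add_zero] at e1 e2
      have b1 := Int.floor_eq_iff.1 e1
      have b2 := Int.floor_eq_iff.1 e2
      have h3 : (1 : ℝ) < 2 ^ L * |xi θ (g i) - xi θ (g j)| := by
        rw [← abs_of_pos (by positivity : (0 : ℝ) < 2 ^ L), ← abs_mul, mul_sub, lt_abs]
        rcases le_abs'.1 h2 with h | h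
        · right
          have : (i : ℝ) - j ≤ -2 := by exact_mod_cast h
          linarith
        · left
          have : (2 : ℝ) ≤ (i : ℝ) - j := by exact_mod_cast h
          linarith
      rw [div_lt_iff₀ (by positivity)]
      linarith
  have h1 := key ((A.image f).filter fun k => Even k) (Finset.filter_subset _ _)
    fun i hi j hj hij => by
      obtain ⟨x, hx⟩ := (Finset.mem_filter.1 hi).2
      obtain ⟨y, hy⟩ := (Finset.mem_filter.1 hj).2
      rw [le_abs]
      omega
  have h2 := key ((A.image f).filter fun k => ¬ Even k) (Finset.filter_subset _ _)
    fun i hi j hj hij => by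
      obtain ⟨x, hx⟩ := Int.not_even_iff_odd.1 (Finset.mem_filter.1 hi).2
      obtain ⟨y, hy⟩ := Int.not_even_iff_odd.1 (Finset.mem_filter.1 hj).2
      rw [le_abs]
      omega
  have h3 := Finset.card_filter_add_card_filter_not (s := A.image f) (fun k => Even k)
  have h4 : ((A.image f).card : ℝ) = ((A.image f).filter fun k => Even k).card +
      ((A.image f).filter fun k => ¬ Even k).card := by exact_mod_cast h3.symm
  linarith

/-- A set of Assouad dimension greater than `t` contains, at some place and in some range of `L`
dyadic scales, more than `c * 2 ^ (t * L)` separated points. -/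
lemma exists_rich {F : Set (ℝ × ℝ)} {t : ℝ} (ht0 : 0 ≤ t) (ht : t < assouadDim F) {c : ℝ}
    (hc : 0 < c) :
    ∃ (A : Finset (ℝ × ℝ)) (k : ℝ) (z : ℝ × ℝ) (L : ℕ), 0 < k ∧ (∀ p ∈ A, p ∈ F) ∧
      (∀ p ∈ A, (0 ≤ (hty k z p).1 ∧ (hty k z p).1 < 1) ∧
        (0 ≤ (hty k z p).2 ∧ (hty k z p).2 < 1)) ∧
      (∀ p ∈ A, ∀ q ∈ A, D L (hty k z p) (hty k z q) → p = q) ∧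
      c * ((2 : ℝ) ^ L) ^ t < A.card ∧ A.card ≤ 2 ^ L * 2 ^ L := by
  have h1 := notMem_of_lt_csInf ht ⟨0, fun x hx => hx.1⟩
  simp only [mem_ofPred_eq, not_and, not_exists] at h1
  have h2 := h1 ht0 (c * 4 ^ t) (by positivity)
  push Not at h2
  obtain ⟨x, hx, r, R, hr, hrR, hcov⟩ := h2
  have hR : 0 < R := hr.trans hrR
  have hRr : 1 < R / r := (one_lt_div hr).2 hrR
  obtain ⟨n, hn1, hn2⟩ := exists_nat_pow_near (show 1 ≤ 2 * (R / r) by linarith)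
    (one_lt_two : (1 : ℝ) < 2)
  set L := n + 1 with hL
  set k : ℝ := 1 / (2 * R) with hk
  have hkpos : 0 < k := by positivity
  set z : ℝ × ℝ := (x.1 - R, x.2 - R) with hz
  set Y := F ∩ Metric.ball x R with hY
  have hunit : ∀ p ∈ Y, (0 ≤ (hty k z p).1 ∧ (hty k z p).1 < 1) ∧
      (0 ≤ (hty k z p).2 ∧ (hty k z p).2 < 1) := by
    intro p hp
    have hd : max (dist p.1 x.1) (dist p.2 x.2) < R := hp.2
    have a1 := (le_max_left _ _).trans_lt hd
    have a2 := (le_max_right _ _).trans_lt hd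
    rw [Real.dist_eq, abs_lt] at a1 a2
    simp only [hty, hk, hz, one_div_mul_eq_div]
    refine ⟨⟨div_nonneg (by linarith) (by linarith), (div_lt_one (by linarith)).2 (by linarith)⟩,
      div_nonneg (by linarith) (by linarith), (div_lt_one (by linarith)).2 (by linarith)⟩
  set f : ℝ × ℝ → ℤ × ℤ := fun p =>
    (⌊2 ^ L * (hty k z p).1⌋, ⌊2 ^ L * (hty k z p).2⌋) with hf
  set Q : Finset (ℤ × ℤ) := Finset.Ico 0 (2 ^ L) ×ˢ Finset.Ico 0 (2 ^ L) with hQ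
  have hp2 : (0 : ℝ) < 2 ^ L := by positivity
  have hfQ : ∀ p ∈ Y, f p ∈ Q := by
    intro p hp
    obtain ⟨⟨a1, a2⟩, a3, a4⟩ := hunit p hp
    have hfl : ∀ y : ℝ, 0 ≤ y → y < 1 → ⌊2 ^ L * y⌋ ∈ Finset.Ico (0 : ℤ) (2 ^ L) := by
      intro y hy0 hy1
      rw [Finset.mem_Ico, Int.floor_nonneg, Int.floor_lt]
      refine ⟨by positivity, ?_⟩
      push_cast
      nlinarith
    exact Finset.mem_product.2 ⟨hfl _ a1 a2, hfl _ a3 a4⟩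
  set I := Q.filter fun i => ∃ p ∈ Y, f p = i with hI
  have hrep : ∀ i ∈ I, ∃ p ∈ Y, f p = i := fun i hi => (Finset.mem_filter.1 hi).2
  choose! g hgY hfg using hrep
  have hinj : Set.InjOn g I := fun i hi j hj hij => by
    rw [← hfg i hi, ← hfg j hj, hij]
  have hcard : (I.image g).card = I.card := Finset.card_image_of_injOn hinj
  have hcovI : coverNumber Y r ≤ I.card := by
    refine coverNumber_le f I (fun p hp => Finset.mem_filter.2 ⟨hfQ p hp, p, hp, rfl⟩) ?_
    intro p _ q _ hpq
    have hD : D L (hty k z p) (hty k z q) := hpq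
    have d1 := D_fst hD
    have d2 := D_snd hD
    have conv : ∀ y y' z' : ℝ, 2 ^ L * |k * (y - z') - k * (y' - z')| < 1 → dist y y' ≤ r := by
      intro y y' z' h
      rw [← mul_sub, abs_mul, abs_of_pos hkpos, sub_sub_sub_cancel_right, ← Real.dist_eq] at h
      have e1 : R / r * r = R := by field_simp
      have e2 : k * (2 * R) = 1 := by rw [hk]; field_simp
      have e3 : 2 * R < 2 ^ L * r := by
        have := mul_lt_mul_of_pos_right hn2 hr
        linarith
      by_contra hlt
      push Not at hlt
      have e4 : 2 ^ L * k * r < 1 := by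
        refine lt_trans ?_ h
        rw [mul_assoc]
        gcongr
      have e5 := mul_lt_mul_of_pos_left e3 hkpos
      linarith
    exact max_le (conv _ _ _ d1) (conv _ _ _ d2)
  refine ⟨I.image g, k, z, L, hkpos, ?_, ?_, ?_, ?_, ?_⟩
  · intro p hp
    obtain ⟨i, hi, rfl⟩ := Finset.mem_image.1 hp
    exact (hgY i hi).1
  · intro p hp
    obtain ⟨i, hi, rfl⟩ := Finset.mem_image.1 hp
    exact hunit _ (hgY i hi)
  · intro p hp q hq hpq
    obtain ⟨i, hi, rfl⟩ := Finset.mem_image.1 hp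
    obtain ⟨j, hj, rfl⟩ := Finset.mem_image.1 hq
    have : f (g i) = f (g j) := hpq
    rw [hfg i hi, hfg j hj] at this
    rw [this]
  · rw [hcard]
    have h3 := hcov.trans_le hcovI
    rw [← ENNReal.ofReal_natCast, ENNReal.ofReal_lt_ofReal_iff_of_nonneg (by positivity)] at h3
    refine lt_of_le_of_lt ?_ h3
    rw [mul_assoc, ← Real.mul_rpow (by norm_num) (by positivity)]
    gcongr
    rw [hL, pow_succ]
    linarith
  · rw [hcard]
    refine (Finset.card_filter_le _ _).trans_eq ?_
    rw [hQ, Finset.card_product, Int.card_Ico, sub_zero]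
    congr 1

/-- Projections of dimension `s` of a set of dimension greater than `t` have fibres of entropy at
least `(t - s) * log 2` per scale. -/
lemma good_of_dim {F : Set (ℝ × ℝ)} {C s t : ℝ} {E : Set ℝ} {Θ : ℕ} (hC : 0 < C) (hs : 0 ≤ s)
    (hst : s ≤ t) (ht : t < assouadDim F) (hΘ : ∀ x ∈ E, |x| ≤ Θ)
    (hE : ∀ θ ∈ E, ∀ A : Finset (ℝ × ℝ), (∀ p ∈ A, p ∈ F) → Hom C s θ A) :
    Good C s E ((t - s) * Real.log 2) := by
  intro ι _ _ w hw L₀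
  set C' := 2 * (C * (1 + Θ) ^ s) with hC'
  have hC'0 : 0 < C' := by positivity
  obtain ⟨A₀, k, z, L, hk, hA₀F, hA₀, hinj, hlow, hup⟩ := exists_rich (hs.trans hst) ht
    (c := C' + 2 ^ L₀ * 2 ^ L₀) (by positivity)
  set A := A₀.image (hty k z) with hAdef
  have hcard : A.card = A₀.card := Finset.card_image_of_injective _ (hty_injective hk.ne' z)
  rw [← hcard] at hlow hup
  have hp : (0 : ℝ) < ((2 : ℝ) ^ L) ^ t := by positivity
  have h2L : (1 : ℝ) ≤ 2 ^ L := one_le_pow₀ (by norm_num)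
  have hone : (1 : ℝ) ≤ ((2 : ℝ) ^ L) ^ t := Real.one_le_rpow h2L (hs.trans hst)
  have hnpos : (0 : ℝ) < A.card := lt_of_le_of_lt (by positivity) hlow
  have hL : L₀ ≤ L := by
    by_contra hlt
    have h1 : (A.card : ℝ) ≤ 2 ^ L * 2 ^ L := by exact_mod_cast hup
    have h2 : (2 : ℝ) ^ L ≤ 2 ^ L₀ := pow_le_pow_right₀ (by norm_num) (by omega)
    nlinarith
  have hunit : ∀ p ∈ A, (0 ≤ p.1 ∧ p.1 < 1) ∧ (0 ≤ p.2 ∧ p.2 < 1) := by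
    intro p hp
    obtain ⟨q, hq, rfl⟩ := Finset.mem_image.1 hp
    exact hA₀ q hq
  have hHom : ∀ θ ∈ E, Hom C s θ A := fun θ hθ => (hE θ hθ A₀ hA₀F).hty hk z
  refine ⟨L, hL, 0, A, ⟨Finset.card_pos.1 (by exact_mod_cast hnpos), hHom⟩, ?_, ?_⟩
  · intro p hp q hq
    have fl : ∀ y : ℝ, 0 ≤ y → y < 1 → ⌊(2 : ℝ) ^ 0 * y⌋ = 0 := fun y h0 h1 => by
      rw [pow_zero, one_mul]; exact Int.floor_eq_zero_iff.2 ⟨h0, h1⟩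
    obtain ⟨⟨a1, a2⟩, a3, a4⟩ := hunit p hp
    obtain ⟨⟨b1, b2⟩, b3, b4⟩ := hunit q hq
    rw [D_iff, fl _ a1 a2, fl _ a3 a4, fl _ b1 b2, fl _ b3 b4]
    exact ⟨rfl, rfl⟩
  · rw [zero_add]
    have hGD : G A (D L) = 0 := by
      refine Finset.sum_eq_zero fun a ha => ?_
      have : cls A (D L) a = {a} := by
        refine Finset.eq_singleton_iff_unique_mem.2 ⟨self_mem_cls ha, fun b hb => ?_⟩
        obtain ⟨hb1, hb2⟩ := mem_cls.1 hb
        obtain ⟨p, hp, rfl⟩ := Finset.mem_image.1 ha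
        obtain ⟨q, hq, rfl⟩ := Finset.mem_image.1 hb1
        rw [hinj q hq p hp hb2]
      rw [this]; simp
    have hGP : ∀ i, (t - s) * Real.log 2 * L * A.card ≤ G A (P (w i) 0 L) - G A (D L) := by
      intro i
      have hθ := hΘ _ (hw i)
      have hV := card_strips (Θ := Θ) (hHom _ (hw i)) (fun p hp => by
        obtain ⟨⟨a1, a2⟩, a3, a4⟩ := hunit p hp
        rw [xi]
        refine (abs_add_le _ _).trans ?_
        rw [abs_mul, abs_of_nonneg a1, abs_of_nonneg a3]
        have := mul_le_mul hθ a4.le a3 (Nat.cast_nonneg Θ)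
        linarith) L
      rw [Real.mul_rpow (by positivity) (by positivity), ← mul_assoc C, ← mul_assoc, ← hC'] at hV
      have hcl : ∀ a ∈ A, cls A ⊤ a = A := fun a _ => by
        ext b
        rw [mem_cls]
        exact and_iff_left trivial
      have h1 := cH_le A (fun p => ⌊2 ^ L * (xi (w i) p + 0)⌋) ⊤
        (fun _ => C' * ((2 : ℝ) ^ L) ^ s) (fun _ _ => by positivity) (fun _ _ _ _ _ => rfl)
        (fun a ha => by rw [hcl a ha]; exact hV)
      have h2 : G A ⊤ = A.card * Real.log A.card := by
        rw [G, Finset.sum_congr rfl fun a ha => by rw [hcl a ha], Finset.sum_const, nsmul_eq_mul]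
      rw [Finset.sum_const, nsmul_eq_mul, cH, inf_top_eq, h2] at h1
      change _ - G A (P (w i) 0 L) ≤ _ at h1
      have h3 : C' * ((2 : ℝ) ^ L) ^ t ≤ A.card := by
        refine le_trans ?_ hlow.le
        gcongr
        have : (0 : ℝ) < 2 ^ L₀ * 2 ^ L₀ := by positivity
        linarith
      have h4 := Real.log_le_log (by positivity) h3
      rw [Real.log_mul hC'0.ne' hp.ne', Real.log_rpow (by positivity), Real.log_pow] at h4
      rw [Real.log_mul hC'0.ne' (by positivity), Real.log_rpow (by positivity),
        Real.log_pow] at h1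
      rw [hGD, sub_zero]
      nlinarith [mul_le_mul_of_nonneg_left h4 hnpos.le]
    have := Finset.sum_le_sum fun i (_ : i ∈ Finset.univ) => hGP i
    rw [Finset.sum_const, nsmul_eq_mul, Finset.card_univ] at this
    linarith

/-- An uncountable set of reals contains a non-empty subset without isolated points. -/
lemma exists_dense_in_itself {E : Set ℝ} (hE : ¬ E.Countable) :
    ∃ E' ⊆ E, E'.Nonempty ∧ ∀ x ∈ E', ∀ ε > 0, ∃ y ∈ E', y ≠ x ∧ |y - x| < ε := by
  set E' := {x ∈ E | ∀ ε > 0, ¬ (E ∩ Metric.ball x ε).Countable} with hE'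
  have hcount : (E \ E').Countable := by
    have h1 : ∀ x ∈ E \ E', ∃ ε > 0, (E ∩ Metric.ball x ε).Countable := fun x hx => by
      by_contra h
      push Not at h
      exact hx.2 ⟨hx.1, h⟩
    choose! ε hε hc using h1
    obtain ⟨t, ht, htc, hcov⟩ := TopologicalSpace.countable_cover_nhdsWithin
      (s := E \ E') (f := fun x => Metric.ball x (ε x))
      fun x hx => mem_nhdsWithin_of_mem_nhds (Metric.ball_mem_nhds x (hε x hx))
    refine (htc.biUnion fun x hx => hc x (ht hx)).mono fun y hy => ?_
    obtain ⟨x, hx, hyx⟩ := mem_iUnion₂.1 (hcov hy)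
    exact mem_iUnion₂.2 ⟨x, hx, hy.1, hyx⟩
  refine ⟨E', fun x hx => hx.1, ?_, ?_⟩
  · by_contra h
    rw [not_nonempty_iff_eq_empty] at h
    rw [h, sdiff_empty] at hcount
    exact hE hcount
  · intro x hx ε hε
    by_contra h
    push Not at h
    refine hx.2 ε hε ((hcount.union (countable_singleton x)).mono fun y hy => ?_)
    by_contra hy'
    simp only [mem_union, mem_sdiff, mem_singleton_iff, not_or, not_and, not_not] at hy'
    have := h y (hy'.1 hy.1) hy'.2
    have h2 := hy.2
    rw [Metric.mem_ball, Real.dist_eq] at h2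
    linarith

/-- The slopes in `[-Θ, Θ]` with a given dimension bound `s < min 1 (dim F)` and a given constant
form a countable set. -/
lemma countable_slopes {F : Set (ℝ × ℝ)} {C s : ℝ} (Θ : ℕ) (hC : 0 < C) (hs : 0 ≤ s) (hs1 : s < 1)
    (hsF : s < assouadDim F) :
    {τ : ℝ | |τ| ≤ Θ ∧ ∀ A : Finset (ℝ × ℝ), (∀ p ∈ A, p ∈ F) → Hom C s τ A}.Countable := by
  by_contra hE
  obtain ⟨E', hsub, hne, hacc⟩ := exists_dense_in_itself hE
  obtain ⟨t, hst, htF⟩ := exists_between hsF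
  exact not_good hne (fun x hx => (hsub hx).1) hacc hs1
    (mul_pos (sub_pos.2 hst) (Real.log_pos one_lt_two))
    (good_of_dim hC hs hst.le htF (fun x hx => (hsub hx).1) fun θ hθ => (hsub hθ).2)

lemma countable_angles {E : Set ℝ} (hE : E.Countable) :
    {θ : ℝ | Real.cos θ ≠ 0 ∧ Real.tan θ ∈ E}.Countable := by
  have h : {θ : ℝ | Real.cos θ ≠ 0 ∧ Real.tan θ ∈ E} ⊆
      ⋃ τ ∈ E, range fun n : ℤ => (n : ℝ) * Real.pi + Real.arctan τ := by
    rintro θ ⟨hc, hE⟩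
    refine mem_iUnion₂.2 ⟨Real.tan θ, hE, ?_⟩
    set φ := Real.arctan (Real.tan θ) with hφ
    have hcφ : Real.cos φ ≠ 0 := (Real.cos_arctan_pos _).ne'
    have h1 : Real.tan φ = Real.tan θ := Real.tan_arctan _
    have h2 : Real.sin (θ - φ) = 0 := by
      rw [Real.tan_eq_sin_div_cos, Real.tan_eq_sin_div_cos, div_eq_div_iff hcφ hc] at h1
      rw [Real.sin_sub]
      linarith
    obtain ⟨n, hn⟩ := Real.sin_eq_zero_iff.1 h2
    exact ⟨n, by simp only; linarith⟩
  exact (hE.biUnion fun τ _ => countable_range _).mono h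

end Reduction

end AssouadProj

/-- for any non-empty planar set `F`, the set of directions in which the Assouad
dimension of the projection drops below `min(1, dim_A F)` is at most countable. -/
theorem stmt5 (F : Set (ℝ × ℝ)) (hF : F.Nonempty) :
    {θ : ℝ | assouadDim (projDir θ '' F) < min 1 (assouadDim F)}.Countable := by
  have hcos : {θ : ℝ | Real.cos θ = 0}.Countable := by
    refine (countable_range fun k : ℤ => (2 * (k : ℝ) + 1) * Real.pi / 2).mono fun θ hθ => ?_
    obtain ⟨k, hk⟩ := Real.cos_eq_zero_iff.1 hθ
    exact ⟨k, hk.symm⟩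
  have hcount : (⋃ x : ℕ × ℚ × ℕ, {θ : ℝ | Real.cos θ ≠ 0 ∧ Real.tan θ ∈
      {τ : ℝ | (0 ≤ (x.2.1 : ℝ) ∧ (x.2.1 : ℝ) < min 1 (assouadDim F)) ∧ |τ| ≤ x.2.2 ∧
        ∀ A : Finset (ℝ × ℝ), (∀ p ∈ A, p ∈ F) →
          AssouadProj.Hom ((x.1 + 1 : ℕ) : ℝ) x.2.1 τ A}}).Countable := by
    refine countable_iUnion fun x => AssouadProj.countable_angles ?_
    by_cases hx : 0 ≤ (x.2.1 : ℝ) ∧ (x.2.1 : ℝ) < min 1 (assouadDim F)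
    · exact (AssouadProj.countable_slopes x.2.2 (by positivity) hx.1
        (hx.2.trans_le (min_le_left _ _)) (hx.2.trans_le (min_le_right _ _))).mono fun τ hτ => hτ.2
    · exact countable_empty.mono fun τ hτ => hx hτ.1
  refine (hcos.union hcount).mono fun θ hθ => ?_
  by_cases hc : Real.cos θ = 0
  · exact Or.inl hc
  · obtain ⟨s, hs1, hs2⟩ := exists_rat_btwn (show assouadDim (projDir θ '' F) < min 1 (assouadDim F) from hθ)
    have h0 : 0 ≤ assouadDim (projDir θ '' F) := Real.sInf_nonneg fun s hs => hs.1
    obtain ⟨N, hN⟩ := AssouadProj.exists_Hom hc (hs2.le.trans (min_le_left _ _)) hs1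
    obtain ⟨Θ, hΘ⟩ := exists_nat_ge |Real.tan θ|
    refine Or.inr (mem_iUnion.2 ⟨(N, s, Θ), hc, ⟨h0.trans hs1.le, hs2⟩, hΘ, ?_⟩)
    intro A hA x R r T hr hR hT hTx hsep
    refine (hN A hA x R r T hr hR hT hTx hsep).trans (mul_le_mul_of_nonneg_right ?_ ?_)
    · push_cast; linarith
    · have : 0 < R := hr.trans_le hR
      positivity

end
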